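/- arXiv:1608.06847 — 4 statements merged into one kernel-verified Lean document; each statement's English description precedes it below -/
import Mathlib

section
/- Let P ∈ ℤ[x] be a polynomial of degree d ≥ 2 and let (m_n)_{n≥1} be a sequence of pairwise distinct integers such that for some t ∈ ℕ one has |m_n| ≤ n^t for all sufficiently large n. Then for Lebesgue-almost all real α, for every ε > 0 there are infinitely many N with N·D_N*({P(m_1)α}, …, {P(m_N)α}) ≥ N^{1/2 − ε}. -/
open Filter MeasureTheory

/-- Star-discrepancy of the first `N` points `x 1, ..., x N` of a sequence in `[0,1)`. -/
noncomputable def starDisc (N : ℕ) (x : ℕ → ℝ) : ℝ :=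
  ⨆ β : Set.Ioc (0:ℝ) 1,
    |(((Finset.Icc 1 N).filter fun n => 0 ≤ x n ∧ x n < (β : ℝ)).card : ℝ) / N - (β : ℝ)|

/-- The divisor bound: `τ(n) = O(n ^ δ)` for every `δ > 0`. -/
theorem exists_card_divisors_le_rpow {δ : ℝ} (hδ : 0 < δ) :
    ∃ C : ℝ, 0 < C ∧ ∀ n : ℕ, n ≠ 0 → (n.divisors.card : ℝ) ≤ C * (n : ℝ) ^ δ := by
  obtain ⟨M, hM⟩ := exists_nat_gt ((2 : ℝ) ^ (1 / δ))
  have hlog : 0 < Real.log 2 := Real.log_pos one_lt_two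
  set C₀ : ℝ := 1 + 1 / (δ * Real.log 2) with hC₀
  have hC₀1 : 1 ≤ C₀ := by rw [hC₀]; linarith [show 0 < 1 / (δ * Real.log 2) by positivity]
  refine ⟨C₀ ^ M, by positivity, fun n hn => ?_⟩
  have hfactor : ∀ p ∈ n.primeFactors, ((n.factorization p + 1 : ℕ) : ℝ) ≤
      (if p < M then C₀ else 1) * ((p ^ n.factorization p : ℕ) : ℝ) ^ δ := by
    intro p hp
    have hp2 : (2 : ℝ) ≤ p := by exact_mod_cast (Nat.prime_of_mem_primeFactors hp).two_le
    set a := n.factorization p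
    have hpow : ((p ^ a : ℕ) : ℝ) ^ δ = ((p : ℝ) ^ δ) ^ a := by
      push_cast
      rw [← Real.rpow_natCast, ← Real.rpow_mul (by positivity), ← Real.rpow_natCast,
        ← Real.rpow_mul (by positivity), mul_comm]
    rw [hpow]
    split_ifs with h
    · have h2 : 1 + δ * Real.log 2 ≤ (p : ℝ) ^ δ := by
        calc 1 + δ * Real.log 2 ≤ Real.exp (δ * Real.log 2) := by
              linarith [Real.add_one_le_exp (δ * Real.log 2)]
          _ = (2 : ℝ) ^ δ := by rw [Real.rpow_def_of_pos two_pos, mul_comm]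
          _ ≤ _ := by gcongr
      have h3 : 1 + a * (δ * Real.log 2) ≤ ((p : ℝ) ^ δ) ^ a :=
        (one_add_mul_le_pow (by nlinarith) a).trans (by gcongr)
      have h4 : ((a + 1 : ℕ) : ℝ) ≤ C₀ * (1 + a * (δ * Real.log 2)) := by
        have : C₀ * (1 + a * (δ * Real.log 2)) =
            1 + a + (1 / (δ * Real.log 2) + a * (δ * Real.log 2)) := by
          rw [hC₀]; field_simp; ring
        rw [this]; push_cast
        have : 0 ≤ 1 / (δ * Real.log 2) + a * (δ * Real.log 2) := by positivity
        linarith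
      exact h4.trans (by gcongr)
    · have h2 : (2 : ℝ) ≤ (p : ℝ) ^ δ := by
        have : (2 : ℝ) ^ (1 / δ) ≤ p := hM.le.trans (by exact_mod_cast not_lt.mp h)
        calc (2 : ℝ) = ((2 : ℝ) ^ (1 / δ)) ^ δ := by
              rw [← Real.rpow_mul two_pos.le, one_div_mul_cancel hδ.ne', Real.rpow_one]
          _ ≤ _ := by gcongr
      rw [one_mul]
      calc ((a + 1 : ℕ) : ℝ) ≤ (2 : ℝ) ^ a := by exact_mod_cast Nat.lt_two_pow_self
        _ ≤ _ := by gcongr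
  rw [Nat.card_divisors hn]
  calc ((∏ p ∈ n.primeFactors, (n.factorization p + 1) : ℕ) : ℝ)
      = ∏ p ∈ n.primeFactors, ((n.factorization p + 1 : ℕ) : ℝ) := by push_cast; rfl
    _ ≤ ∏ p ∈ n.primeFactors,
          ((if p < M then C₀ else 1) * ((p ^ n.factorization p : ℕ) : ℝ) ^ δ) :=
        Finset.prod_le_prod (fun _ _ => by positivity) hfactor
    _ = (∏ p ∈ n.primeFactors, if p < M then C₀ else 1) * (n : ℝ) ^ δ := by
        rw [Finset.prod_mul_distrib, Real.finsetProd_rpow _ _ (fun _ _ => by positivity)]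
        congr 2
        rw [← Nat.cast_prod]
        exact congrArg Nat.cast (Nat.prod_factorization_pow_eq_self hn)
    _ ≤ C₀ ^ M * (n : ℝ) ^ δ := by
        gcongr
        rw [Finset.prod_ite, Finset.prod_const, Finset.prod_const_one, mul_one]
        refine pow_le_pow_right₀ hC₀1 ?_
        calc _ ≤ (Finset.range M).card := Finset.card_le_card fun p hp => by
              simpa using (Finset.mem_filter.mp hp).2
          _ = M := Finset.card_range M

open Polynomial in
/-- A difference `P(X + d) - P(X)` of a polynomial of degree at least two is never constant. -/
theorem comp_X_add_C_sub_ne_C {P : ℤ[X]} (hdeg : 2 ≤ P.natDegree) {d : ℤ} (hd : d ≠ 0) (k : ℤ) :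
    P.comp (X + C d) - P - C k ≠ 0 := by
  intro h
  have hder : (derivative P).comp (X + C d) = derivative P := by
    have := congrArg derivative h
    simpa [derivative_comp, sub_eq_zero] using this
  have hper : ∀ n : ℕ, (derivative P).eval (n * d) = (derivative P).eval 0 := by
    intro n
    induction n with
    | zero => simp
    | succ n ih =>
      rw [← ih]
      conv_rhs => rw [← hder]
      simp [add_mul]
  have hconst : derivative P - C ((derivative P).eval 0) = 0 := by
    refine eq_zero_of_infinite_isRoot _ (Set.Infinite.mono ?_
      (Set.infinite_range_of_injective (f := fun n : ℕ => (n : ℤ) * d) ?_))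
    · rintro _ ⟨n, rfl⟩
      simp [hper n]
    · intro a b hab
      simpa [hd] using hab
  have hnat := natDegree_eq_of_degree_eq_some (degree_derivative (p := P) (by omega))
  rw [sub_eq_zero.mp hconst, natDegree_C] at hnat
  omega

open Polynomial in
/-- A non-zero integer `k` is a difference of two values of a polynomial of degree at least two
at most `O(τ(k))` times. -/
theorem card_eval_sub_eq_le {P : ℤ[X]} (hdeg : 2 ≤ P.natDegree) (S : Finset ℕ) {m : ℕ → ℤ}
    (hm : Set.InjOn m S) {k : ℤ} (hk : k ≠ 0) :
    ((S ×ˢ S).filter fun q => P.eval (m q.1) - P.eval (m q.2) = k).card ≤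
      P.natDegree * (2 * k.natAbs.divisors.card) := by
  classical
  set D : Finset ℤ := k.natAbs.divisors.image (fun n : ℕ => (n : ℤ)) ∪
    k.natAbs.divisors.image (fun n : ℕ => -(n : ℤ))
  have hD : D.card ≤ 2 * k.natAbs.divisors.card :=
    (Finset.card_union_le _ _).trans (by
      rw [two_mul]; exact add_le_add Finset.card_image_le Finset.card_image_le)
  refine (Finset.card_le_mul_card_image_of_maps_to (f := fun q => m q.1 - m q.2) (t := D)
    ?_ P.natDegree ?_).trans (Nat.mul_le_mul_left _ hD)
  · intro q hq
    obtain ⟨-, hq⟩ := Finset.mem_filter.mp hq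
    have hdvd : (m q.1 - m q.2).natAbs ∈ k.natAbs.divisors := by
      rw [Nat.mem_divisors, Int.natAbs_dvd_natAbs]
      exact ⟨hq ▸ sub_dvd_eval_sub _ _ P, by simpa using hk⟩
    simp only [D, Finset.mem_union, Finset.mem_image]
    rcases Int.natAbs_eq (m q.1 - m q.2) with h | h
    · exact Or.inl ⟨_, hdvd, h.symm⟩
    · exact Or.inr ⟨_, hdvd, h.symm⟩
  · intro d _
    rcases eq_or_ne d 0 with rfl | hd
    · rw [Finset.card_eq_zero.mpr]
      · exact Nat.zero_le _
      · refine Finset.filter_eq_empty_iff.mpr fun q hq h => hk ?_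
        rw [← (Finset.mem_filter.mp hq).2, sub_eq_zero.mp h, sub_self]
    · set Q := P.comp (X + C d) - P - C k
      have hQ : Q ≠ 0 := comp_X_add_C_sub_ne_C hdeg hd k
      have hQdeg : Q.natDegree ≤ P.natDegree := by
        refine (natDegree_sub_C).trans_le ((natDegree_sub_le _ _).trans (max_le ?_ le_rfl))
        exact natDegree_comp_le.trans (by rw [natDegree_X_add_C, mul_one])
      calc _ ≤ Q.roots.toFinset.card := by
            refine Finset.card_le_card_of_injOn (fun q => m q.2) ?_ ?_
            · intro q hq
              simp only [Finset.coe_filter, Finset.mem_filter, Set.mem_ofPred_eq] at hq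
              have h1 : m q.2 + d = m q.1 := by linarith [hq.2]
              simpa [hQ] using (show Q.eval (m q.2) = 0 by simp [Q, h1, hq.1.2])
            · intro q hq q' hq' h
              simp only [Finset.coe_filter, Finset.mem_filter, Set.mem_ofPred_eq,
                Finset.mem_product] at hq hq' h
              exact Prod.ext (hm hq.1.1.1 hq'.1.1.1 (by linarith [hq.2, hq'.2]))
                (hm hq.1.1.2 hq'.1.1.2 h)
        _ ≤ P.natDegree :=
            (Multiset.toFinset_card_le _).trans ((card_roots' Q).trans hQdeg)

open Polynomial in
theorem abs_eval_le_sum_abs_coeff_mul_pow (P : ℤ[X]) {x y : ℤ} (hxy : |x| ≤ y) (hy : 1 ≤ y) :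
    |P.eval x| ≤ (∑ i ∈ Finset.range (P.natDegree + 1), |P.coeff i|) * y ^ P.natDegree := by
  rw [eval_eq_sum_range, Finset.sum_mul]
  refine (Finset.abs_sum_le_sum_abs _ _).trans (Finset.sum_le_sum fun i hi => ?_)
  rw [abs_mul, abs_pow]
  have hi' : i ≤ P.natDegree := by simpa [Nat.lt_succ_iff] using hi
  calc |P.coeff i| * |x| ^ i ≤ |P.coeff i| * y ^ i := by gcongr
    _ ≤ _ := by gcongr

/-- Along a sequence of polynomial growth, the values of a polynomial grow polynomially. -/
theorem exists_abs_eval_le (P : Polynomial ℤ) (m : ℕ → ℤ) (t : ℕ)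
    (hm : ∃ n₀ : ℕ, ∀ n : ℕ, n₀ ≤ n → |m n| ≤ (n : ℤ) ^ t) :
    ∃ B : ℕ, ∀ n : ℕ, 1 ≤ n → (P.eval (m n)).natAbs ≤ B * n ^ (t * P.natDegree) := by
  obtain ⟨n₀, hn₀⟩ := hm
  set A : ℤ := ∑ i ∈ Finset.range (P.natDegree + 1), |P.coeff i|
  have hA : 0 ≤ A := Finset.sum_nonneg fun _ _ => abs_nonneg _
  set E : ℤ := ∑ n ∈ Finset.range n₀, |P.eval (m n)|
  have hE : 0 ≤ E := Finset.sum_nonneg fun _ _ => abs_nonneg _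
  refine ⟨(A + E).toNat, fun n hn => ?_⟩
  zify
  rw [Int.toNat_of_nonneg (by omega)]
  have hn1 : (1 : ℤ) ≤ n := by exact_mod_cast hn
  have hpow : (1 : ℤ) ≤ (n : ℤ) ^ (t * P.natDegree) := one_le_pow₀ hn1
  rcases le_or_gt n₀ n with h | h
  · have := abs_eval_le_sum_abs_coeff_mul_pow P (hn₀ n h) (one_le_pow₀ hn1)
    rw [← pow_mul] at this
    refine this.trans ?_
    gcongr
    omega
  · have : |P.eval (m n)| ≤ E :=
      Finset.single_le_sum (f := fun n => |P.eval (m n)|) (fun _ _ => abs_nonneg _)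
        (Finset.mem_range.mpr h)
    nlinarith

/-- The character `x ↦ exp (2πix)`. -/
noncomputable def unitExp (x : ℝ) : ℂ := Complex.exp (2 * Real.pi * x * Complex.I)

theorem unitExp_add (x y : ℝ) : unitExp (x + y) = unitExp x * unitExp y := by
  simp only [unitExp, ← Complex.exp_add]
  push_cast
  ring_nf

theorem unitExp_intCast (n : ℤ) : unitExp n = 1 := by
  rw [unitExp, Complex.exp_eq_one_iff]
  exact ⟨n, by push_cast; ring⟩

theorem norm_unitExp (x : ℝ) : ‖unitExp x‖ = 1 := by
  rw [unitExp, ← Complex.norm_exp_ofReal_mul_I (2 * Real.pi * x)]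
  push_cast
  rfl

theorem conj_unitExp (x : ℝ) : (starRingEnd ℂ) (unitExp x) = unitExp (-x) := by
  simp [unitExp, ← Complex.exp_conj, Complex.conj_ofNat]

theorem continuous_unitExp : Continuous unitExp := by
  unfold unitExp
  fun_prop

theorem unitExp_natCast_mul_fract (h : ℕ) (y : ℝ) :
    unitExp (h * Int.fract y) = unitExp (h * y) := by
  have : (h * y : ℝ) = h * Int.fract y + ((h * ⌊y⌋ : ℤ) : ℝ) := by
    push_cast
    rw [← mul_add, Int.fract_add_floor]
  rw [this, unitExp_add, unitExp_intCast, mul_one]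

theorem hasDerivAt_unitExp_mul (h x : ℝ) :
    HasDerivAt (fun β : ℝ => unitExp (h * β))
      (2 * Real.pi * h * Complex.I * unitExp (h * x)) x := by
  have h1 : HasDerivAt (fun β : ℝ => (2 * Real.pi * ((h * β : ℝ) : ℂ) * Complex.I))
      (2 * Real.pi * h * Complex.I) x := by
    have := ((Complex.ofRealCLM.hasDerivAt (x := x)).const_mul
      (2 * Real.pi * (h : ℂ) * Complex.I))
    simp only [Complex.ofRealCLM_apply, Complex.ofReal_one, mul_one] at this
    refine this.congr_of_eventuallyEq (Eventually.of_forall fun β => ?_)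
    push_cast
    ring
  have := h1.cexp
  rwa [mul_comm (Complex.exp _)] at this

theorem integral_unitExp_intCast_mul (k n : ℤ) :
    ∫ α in Set.Ioc (k : ℝ) (k + 1), unitExp (n * α) = if n = 0 then 1 else 0 := by
  split_ifs with hn
  · simp [hn, unitExp]
  · have hc : (2 * Real.pi * (n : ℝ) * Complex.I : ℂ) ≠ 0 := by
      simp [hn, Real.pi_ne_zero]
    have hderiv : ∀ x ∈ Set.uIcc (k : ℝ) (k + 1), HasDerivAt
        (fun β : ℝ => unitExp (n * β) / (2 * Real.pi * (n : ℝ) * Complex.I))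
        (unitExp (n * x)) x := fun x _ => by
      have := (hasDerivAt_unitExp_mul n x).div_const (2 * Real.pi * (n : ℝ) * Complex.I)
      rwa [mul_div_cancel_left₀ _ hc] at this
    rw [← intervalIntegral.integral_of_le (by linarith),
      intervalIntegral.integral_eq_sub_of_hasDerivAt hderiv
        ((continuous_unitExp.comp (by fun_prop)).intervalIntegrable _ _)]
    have h1 : unitExp (n * (k + 1)) = 1 := by
      rw [← unitExp_intCast (n * (k + 1))]; push_cast; rfl
    have h2 : unitExp (n * k) = 1 := by
      rw [← unitExp_intCast (n * k)]; push_cast; rfl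
    rw [h1, h2, sub_self]

/-- The mean square of an exponential sum with repeated frequencies. -/
theorem integral_norm_sum_unitExp_sq_le {ι : Type*} (T : Finset ι) (φ : ι → ℤ) {K : ℝ}
    (hK : ∀ σ ∈ T, ((T.filter fun τ => φ τ = φ σ).card : ℝ) ≤ K) (k : ℤ) :
    ∫ α in Set.Ioc (k : ℝ) (k + 1), ‖∑ τ ∈ T, unitExp (φ τ * α)‖ ^ 2 ≤ T.card * K := by
  have hexpand : ∀ α : ℝ, ((‖∑ τ ∈ T, unitExp (φ τ * α)‖ ^ 2 : ℝ) : ℂ) =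
      ∑ σ ∈ T, ∑ τ ∈ T, unitExp ((φ τ - φ σ : ℤ) * α) := by
    intro α
    push_cast
    rw [← Complex.mul_conj', map_sum, Finset.sum_mul_sum, Finset.sum_comm]
    refine Finset.sum_congr rfl fun σ _ => Finset.sum_congr rfl fun τ _ => ?_
    rw [conj_unitExp, ← unitExp_add]
    congr 1
    ring
  have hint : ∀ n : ℤ, IntegrableOn (fun α : ℝ => unitExp (n * α)) (Set.Ioc (k : ℝ) (k + 1)) :=
    fun n => ((continuous_unitExp.comp (by fun_prop)).integrableOn_Icc).mono_set
      Set.Ioc_subset_Icc_self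
  have hvalue : ∫ α in Set.Ioc (k : ℝ) (k + 1), ‖∑ τ ∈ T, unitExp (φ τ * α)‖ ^ 2 =
      ∑ σ ∈ T, ((T.filter fun τ => φ τ = φ σ).card : ℝ) := by
    apply Complex.ofReal_injective
    rw [← integral_complex_ofReal]
    simp_rw [hexpand]
    rw [integral_finsetSum _ fun σ _ => integrable_finsetSum _ fun τ _ => hint _]
    rw [Complex.ofReal_sum]
    refine Finset.sum_congr rfl fun σ _ => ?_
    rw [integral_finsetSum _ fun τ _ => hint _]
    simp_rw [integral_unitExp_intCast_mul, sub_eq_zero]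
    simp
  rw [hvalue, ← nsmul_eq_mul]
  exact Finset.sum_le_card_nsmul _ _ _ hK

theorem abs_card_div_sub_le_starDisc (N : ℕ) (x : ℕ → ℝ) {β : ℝ} (hβ : β ∈ Set.Ioc (0 : ℝ) 1) :
    |(((Finset.Icc 1 N).filter fun n => 0 ≤ x n ∧ x n < β).card : ℝ) / N - β| ≤
      starDisc N x := by
  refine le_ciSup (f := fun β : Set.Ioc (0:ℝ) 1 =>
    |(((Finset.Icc 1 N).filter fun n => 0 ≤ x n ∧ x n < (β : ℝ)).card : ℝ) / N - (β : ℝ)|)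
    ⟨1, ?_⟩ ⟨β, hβ⟩
  rintro _ ⟨⟨γ, hγ0, hγ1⟩, rfl⟩
  have hcard : (((Finset.Icc 1 N).filter fun n => 0 ≤ x n ∧ x n < γ).card : ℝ) ≤ N := by
    exact_mod_cast (Finset.card_filter_le _ _).trans (by simp)
  have h1 := div_le_one_of_le₀ hcard (Nat.cast_nonneg N)
  have h0 : 0 ≤ (((Finset.Icc 1 N).filter fun n => 0 ≤ x n ∧ x n < γ).card : ℝ) / N := by
    positivity
  exact abs_le.mpr ⟨by linarith, by linarith⟩

/-- Koksma's inequality for the character `x ↦ exp (2πihx)`. -/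
theorem norm_sum_unitExp_le_starDisc {N : ℕ} (hN : 1 ≤ N) {h : ℕ} (hh : 1 ≤ h) {x : ℕ → ℝ}
    (hx : ∀ n, x n ∈ Set.Ico (0 : ℝ) 1) :
    ‖∑ n ∈ Finset.Icc 1 N, unitExp (h * x n)‖ ≤ 2 * Real.pi * h * (N * starDisc N x) := by
  set f : ℝ → ℂ := fun β => 2 * Real.pi * (h : ℝ) * Complex.I * unitExp (h * β) with hf
  have hfcont : Continuous f := continuous_const.mul (continuous_unitExp.comp (by fun_prop))
  have hone : unitExp ((h : ℝ) * 1) = 1 := by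
    rw [mul_one]; exact_mod_cast unitExp_intCast h
  have hN0 : (N : ℝ) ≠ 0 := by positivity
  have hpoint : ∀ y ∈ Set.Ico (0 : ℝ) 1,
      ∫ β in (0 : ℝ)..1, (Set.Ioi y).indicator f β = 1 - unitExp (h * y) := by
    intro y hy
    rw [intervalIntegral.integral_of_le zero_le_one, setIntegral_indicator measurableSet_Ioi]
    have : Set.Ioc (0 : ℝ) 1 ∩ Set.Ioi y = Set.Ioc y 1 := by
      ext z
      simp only [Set.mem_inter_iff, Set.mem_Ioc, Set.mem_Ioi]
      constructor
      · rintro ⟨⟨_, h1⟩, h2⟩; exact ⟨h2, h1⟩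
      · rintro ⟨h2, h1⟩; exact ⟨⟨hy.1.trans_lt h2, h1⟩, h2⟩
    rw [this, ← intervalIntegral.integral_of_le hy.2.le,
      intervalIntegral.integral_eq_sub_of_hasDerivAt (fun z _ => hasDerivAt_unitExp_mul h z)
        (hfcont.intervalIntegrable _ _), hone]
  have hind : ∀ y, IntervalIntegrable ((Set.Ioi y).indicator f) volume 0 1 := fun y => by
    rw [intervalIntegrable_iff]
    exact (intervalIntegrable_iff.mp (hfcont.intervalIntegrable 0 1)).indicator measurableSet_Ioi
  have hid : ∫ β in (0 : ℝ)..1, (β : ℂ) * f β = 1 := by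
    have hc : (2 * Real.pi * (h : ℝ) * Complex.I : ℂ) ≠ 0 := by
      simp [(show h ≠ 0 by omega), Real.pi_ne_zero]
    have hderiv : ∀ z ∈ Set.uIcc (0 : ℝ) 1, HasDerivAt (fun β : ℝ => (β : ℂ) * unitExp (h * β) -
        unitExp (h * β) / (2 * Real.pi * (h : ℝ) * Complex.I)) ((z : ℂ) * f z) z := by
      intro z _
      have h1 := (Complex.ofRealCLM.hasDerivAt (x := z)).mul (hasDerivAt_unitExp_mul h z)
      have h2 := (hasDerivAt_unitExp_mul h z).div_const (2 * Real.pi * (h : ℝ) * Complex.I)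
      rw [mul_div_cancel_left₀ _ hc] at h2
      exact (h1.sub h2).congr_deriv (by simp [hf])
    rw [intervalIntegral.integral_eq_sub_of_hasDerivAt hderiv
      ((Complex.continuous_ofReal.mul hfcont).intervalIntegrable _ _), hone]
    simp [unitExp]
  have hrepr : ∑ n ∈ Finset.Icc 1 N, unitExp (h * x n) = ∫ β in (0 : ℝ)..1,
      ((N : ℂ) * ((β : ℂ) * f β) - ∑ n ∈ Finset.Icc 1 N, (Set.Ioi (x n)).indicator f β) := by
    have hint : IntervalIntegrable (fun β : ℝ => (N : ℂ) * ((β : ℂ) * f β)) volume 0 1 :=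
      (continuous_const.mul (Complex.continuous_ofReal.mul hfcont)).intervalIntegrable _ _
    have hsum : IntervalIntegrable
        (fun β => ∑ n ∈ Finset.Icc 1 N, (Set.Ioi (x n)).indicator f β) volume 0 1 := by
      simpa only [Finset.sum_fn] using
        IntervalIntegrable.sum (Finset.Icc 1 N) (f := fun n => (Set.Ioi (x n)).indicator f)
          fun n _ => hind (x n)
    rw [intervalIntegral.integral_sub hint hsum, intervalIntegral.integral_const_mul, hid,
      intervalIntegral.integral_finsetSum fun n _ => hind (x n),
      Finset.sum_congr rfl fun n _ => hpoint (x n) (hx n)]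
    simp
  have hbound : ∀ β ∈ Set.uIoc (0 : ℝ) 1, ‖(N : ℂ) * ((β : ℂ) * f β) -
      ∑ n ∈ Finset.Icc 1 N, (Set.Ioi (x n)).indicator f β‖ ≤
        2 * Real.pi * h * (N * starDisc N x) := by
    intro β hβ
    rw [Set.uIoc_of_le zero_le_one] at hβ
    set A : ℝ := (((Finset.Icc 1 N).filter fun n => 0 ≤ x n ∧ x n < β).card : ℝ) with hA
    have hsum : ∑ n ∈ Finset.Icc 1 N, (Set.Ioi (x n)).indicator f β = (A : ℂ) * f β := by
      simp [Set.indicator_apply, hA, Finset.sum_ite, fun n => (hx n).1]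
    have hnorm : ‖f β‖ = 2 * Real.pi * h := by
      simp [hf, norm_unitExp, abs_of_pos Real.pi_pos]
    have heq : (N : ℂ) * ((β : ℂ) * f β) - (A : ℂ) * f β =
        ((-(N * (A / N - β)) : ℝ) : ℂ) * f β := by
      rw [mul_sub, mul_div_cancel₀ _ hN0]
      push_cast
      ring
    rw [hsum, heq, norm_mul, hnorm, Complex.norm_real, Real.norm_eq_abs, abs_neg, abs_mul,
      Nat.abs_cast, mul_comm]
    gcongr
    exact abs_card_div_sub_le_starDisc N x hβ
  rw [hrepr]
  simpa using intervalIntegral.norm_integral_le_of_norm_le_const hbound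

/-- If few triples `(h, i, j)` share a common non-zero value of `h * (a i - a j)`, the quadratic
mean over `h ≤ H` of the exponential sums with frequencies `h * a n` is rarely small. -/
theorem volume_sum_norm_sq_le_half {a : ℕ → ℤ} {N H : ℕ} (hN : 1 ≤ N) (hH : 1 ≤ H) {K : ℝ}
    (hK0 : 0 ≤ K) (hK : ∀ σ ∈ Finset.Icc 1 H ×ˢ Finset.Icc 1 N ×ˢ Finset.Icc 1 N,
      (σ.1 : ℤ) * (a σ.2.1 - a σ.2.2) ≠ 0 →
      (((Finset.Icc 1 H ×ˢ Finset.Icc 1 N ×ˢ Finset.Icc 1 N).filter fun q : ℕ × ℕ × ℕ =>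
        (q.1 : ℤ) * (a q.2.1 - a q.2.2) = σ.1 * (a σ.2.1 - a σ.2.2)).card : ℝ) ≤ K) (k : ℤ) :
    volume.restrict (Set.Ioc (k : ℝ) (k + 1)) {α : ℝ | ∑ h ∈ Finset.Icc 1 H,
      ‖∑ n ∈ Finset.Icc 1 N, unitExp (h * (a n * α))‖ ^ 2 ≤ H * N / 2} ≤
        ENNReal.ofReal (4 * K / H) := by
  set U := Finset.Icc 1 H ×ˢ Finset.Icc 1 N ×ˢ Finset.Icc 1 N
  set φ : ℕ × ℕ × ℕ → ℤ := fun q => (q.1 : ℤ) * (a q.2.1 - a q.2.2) with hφ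
  set T := U.filter fun q => φ q ≠ 0 with hT
  set μ := volume.restrict (Set.Ioc (k : ℝ) (k + 1)) with hμ
  have hHpos : (0 : ℝ) < H := by exact_mod_cast hH
  have hNpos : (0 : ℝ) < N := by exact_mod_cast hN
  have hU : U.card = H * (N * N) := by simp [U]
  have hdiag : H * N ≤ (U.filter fun q => φ q = 0).card := by
    calc H * N = (Finset.Icc 1 H ×ˢ Finset.Icc 1 N).card := by simp
      _ ≤ _ := by
        refine Finset.card_le_card_of_injOn (fun q => (q.1, q.2, q.2)) ?_ ?_
        · intro q hq
          simp only [Finset.coe_product, Set.mem_prod, Finset.mem_coe] at hq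
          simp only [Finset.coe_filter, Set.mem_ofPred_eq, U, Finset.mem_product]
          exact ⟨⟨hq.1, hq.2, hq.2⟩, by simp [hφ]⟩
        · intro q _ q' _ h
          simp only [Prod.mk.injEq] at h
          exact Prod.ext h.1 h.2.1
  have hexpand : ∀ α : ℝ, ((∑ h ∈ Finset.Icc 1 H,
      ‖∑ n ∈ Finset.Icc 1 N, unitExp (h * (a n * α))‖ ^ 2 : ℝ) : ℂ) =
        ((U.filter fun q => φ q = 0).card : ℝ) + ∑ q ∈ T, unitExp (φ q * α) := by
    intro α
    have hzero : (((U.filter fun q => φ q = 0).card : ℝ) : ℂ) =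
        ∑ q ∈ U.filter fun q => φ q = 0, unitExp (φ q * α) := by
      rw [Finset.sum_congr rfl fun q hq => by
        rw [(Finset.mem_filter.mp hq).2, Int.cast_zero, zero_mul]]
      simp [unitExp]
    rw [hzero, hT, Finset.sum_filter_add_sum_filter_not, Finset.sum_product, Complex.ofReal_sum]
    refine Finset.sum_congr rfl fun h _ => ?_
    rw [Finset.sum_product, Complex.ofReal_pow, ← Complex.mul_conj', map_sum, Finset.sum_mul_sum]
    refine Finset.sum_congr rfl fun i _ => Finset.sum_congr rfl fun j _ => ?_
    rw [conj_unitExp, ← unitExp_add]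
    congr 1
    simp only [hφ]
    push_cast
    ring
  have hsub : {α : ℝ | ∑ h ∈ Finset.Icc 1 H,
      ‖∑ n ∈ Finset.Icc 1 N, unitExp (h * (a n * α))‖ ^ 2 ≤ H * N / 2} ⊆
        {α : ℝ | ((H * N / 2 : ℝ)) ^ 2 ≤ ‖∑ q ∈ T, unitExp (φ q * α)‖ ^ 2} := by
    intro α hα
    simp only [Set.mem_ofPred_eq] at hα ⊢
    gcongr
    rw [← sub_eq_iff_eq_add'.mpr (hexpand α), ← Complex.ofReal_sub, Complex.norm_real,
      Real.norm_eq_abs]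
    have : (H * N : ℝ) ≤ ((U.filter fun q => φ q = 0).card : ℝ) := by exact_mod_cast hdiag
    exact le_abs.mpr (Or.inr (by linarith))
  have hfibre : ∀ σ ∈ T, ((T.filter fun τ => φ τ = φ σ).card : ℝ) ≤ K := by
    intro σ hσ
    obtain ⟨hσU, hσ0⟩ := Finset.mem_filter.mp hσ
    refine le_trans ?_ (hK σ hσU hσ0)
    exact_mod_cast Finset.card_le_card (Finset.filter_subset_filter _ (Finset.filter_subset _ _))
  have hcont : Continuous fun α : ℝ => ‖∑ q ∈ T, unitExp (φ q * α)‖ ^ 2 :=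
    (continuous_finsetSum _ fun q _ => continuous_unitExp.comp (by fun_prop)).norm.pow 2
  have hmarkov := mul_meas_ge_le_integral_of_nonneg (μ := μ)
    (f := fun α : ℝ => ‖∑ q ∈ T, unitExp (φ q * α)‖ ^ 2)
    (Eventually.of_forall fun _ => by positivity)
    (hcont.integrableOn_Icc.mono_set Set.Ioc_subset_Icc_self) ((H * N / 2 : ℝ) ^ 2)
  have hmean := integral_norm_sum_unitExp_sq_le T φ hfibre k
  have hTcard : T.card * K ≤ H * (N * N) * K := by
    gcongr
    exact_mod_cast hU ▸ Finset.card_filter_le U _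
  refine (measure_mono hsub).trans ?_
  rw [← ENNReal.ofReal_toReal (measure_ne_top μ _)]
  refine ENNReal.ofReal_le_ofReal ?_
  have hpos : (0 : ℝ) < (H * N / 2) ^ 2 := by positivity
  refine le_of_mul_le_mul_left ((hmarkov.trans (hmean.trans hTcard)).trans_eq ?_) hpos
  field_simp
  ring

/-- A non-zero integer `v` is of the form `h * (P(x) - P(y))` at most `O(τ(v) ^ 2)` times. -/
theorem card_mul_eval_sub_eq_le {P : Polynomial ℤ} (hdeg : 2 ≤ P.natDegree) {m : ℕ → ℤ}
    (S R : Finset ℕ) (hm : Set.InjOn m S) {v : ℤ} (hv : v ≠ 0) :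
    ((R ×ˢ S ×ˢ S).filter fun q : ℕ × ℕ × ℕ =>
      (q.1 : ℤ) * (P.eval (m q.2.1) - P.eval (m q.2.2)) = v).card ≤
        2 * P.natDegree * v.natAbs.divisors.card ^ 2 := by
  have hv' : v.natAbs ≠ 0 := by simpa using hv
  refine (Finset.card_le_mul_card_image_of_maps_to (f := fun q => q.1) (t := v.natAbs.divisors)
    ?_ (P.natDegree * (2 * v.natAbs.divisors.card)) ?_).trans_eq (by ring)
  · intro q hq
    obtain ⟨-, hq⟩ := Finset.mem_filter.mp hq
    rw [Nat.mem_divisors, ← Int.natCast_dvd]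
    exact ⟨⟨_, hq.symm⟩, hv'⟩
  · intro h hh
    obtain ⟨k, hk⟩ := Int.natCast_dvd.mpr (Nat.dvd_of_mem_divisors hh)
    have hk0 : k ≠ 0 := by rintro rfl; simp [hk] at hv
    have hh0 : (h : ℤ) ≠ 0 := by rintro h0; simp [hk, h0] at hv
    have hdvd : k.natAbs ∣ v.natAbs := Int.natAbs_dvd_natAbs.mpr ⟨h, by rw [hk, mul_comm]⟩
    calc _ ≤ ((S ×ˢ S).filter fun q => P.eval (m q.1) - P.eval (m q.2) = k).card := by
          refine Finset.card_le_card_of_injOn (fun q => q.2) ?_ ?_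
          · intro q hq
            simp only [Finset.coe_filter, Finset.mem_filter, Set.mem_ofPred_eq] at hq ⊢
            obtain ⟨⟨hq, hqv⟩, rfl⟩ := hq
            exact ⟨(Finset.mem_product.mp hq).2, mul_left_cancel₀ hh0 (hqv.trans hk)⟩
          · intro q hq q' hq' h
            simp only [Finset.coe_filter, Finset.mem_filter, Set.mem_ofPred_eq] at hq hq'
            exact Prod.ext (hq.2.trans hq'.2.symm) h
      _ ≤ P.natDegree * (2 * k.natAbs.divisors.card) := card_eval_sub_eq_le hdeg S hm hk0
      _ ≤ _ := by
          gcongr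

theorem exists_volume_sum_norm_sq_le {P : Polynomial ℤ} (hdeg : 2 ≤ P.natDegree)
    {m : ℕ → ℤ} (hm_distinct : ∀ i j : ℕ, 1 ≤ i → 1 ≤ j → m i = m j → i = j)
    {t : ℕ} (hm_growth : ∃ n₀ : ℕ, ∀ n : ℕ, n₀ ≤ n → |m n| ≤ (n : ℤ) ^ t) (s : ℕ) :
    ∃ C : ℝ, ∀ M : ℕ, 1 ≤ M → ∀ k : ℤ,
      volume.restrict (Set.Ioc (k : ℝ) (k + 1)) {α : ℝ | ∑ h ∈ Finset.Icc 1 (M ^ 3),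
        ‖∑ n ∈ Finset.Icc 1 (M ^ s), unitExp (h * ((P.eval (m n) : ℤ) * α))‖ ^ 2 ≤
          (M ^ 3 : ℕ) * (M ^ s : ℕ) / 2} ≤ ENNReal.ofReal (C * (1 / (M : ℝ) ^ 2)) := by
  obtain ⟨B, hB⟩ := exists_abs_eval_le P m t hm_growth
  set u := t * P.natDegree
  set δ : ℝ := 1 / (2 * ((3 + s * u : ℕ) : ℝ)) with hδ
  have hδ0 : 0 < δ := by positivity
  obtain ⟨D, hD0, hD⟩ := exists_card_divisors_le_rpow hδ0
  refine ⟨4 * (2 * P.natDegree * (D * (2 * B : ℝ) ^ δ) ^ 2), fun M hM k => ?_⟩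
  have hMpos : (0 : ℝ) < M := by exact_mod_cast hM
  have hmain := volume_sum_norm_sq_le_half (a := fun n => P.eval (m n)) (N := M ^ s) (H := M ^ 3)
    (K := 2 * P.natDegree * (D * (2 * B : ℝ) ^ δ) ^ 2 * M) (Nat.one_le_pow _ _ hM)
    (Nat.one_le_pow _ _ hM) (by positivity) ?_ k
  · refine hmain.trans_eq (congrArg ENNReal.ofReal ?_)
    push_cast
    field_simp
  intro q hq hv
  set v := (q.1 : ℤ) * (P.eval (m q.2.1) - P.eval (m q.2.2)) with hvdef
  simp only [Finset.mem_product, Finset.mem_Icc] at hq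
  have hvle : v.natAbs ≤ 2 * B * M ^ (3 + s * u) := by
    have hterm : ∀ n, 1 ≤ n → n ≤ M ^ s → (P.eval (m n)).natAbs ≤ B * M ^ (s * u) :=
      fun n h1 h2 => (hB n h1).trans (by rw [pow_mul M]; gcongr)
    calc v.natAbs ≤ M ^ 3 * (B * M ^ (s * u) + B * M ^ (s * u)) := by
          rw [hvdef, Int.natAbs_mul, Int.natAbs_natCast]
          exact Nat.mul_le_mul hq.1.2 ((Int.natAbs_sub_le _ _).trans
            (add_le_add (hterm _ hq.2.1.1 hq.2.1.2) (hterm _ hq.2.2.1 hq.2.2.2)))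
      _ = _ := by ring
  have hpow : (((M : ℝ) ^ (3 + s * u)) ^ δ) ^ 2 = M := by
    rw [← Real.rpow_natCast, ← Real.rpow_natCast, ← Real.rpow_mul hMpos.le,
      ← Real.rpow_mul hMpos.le]
    have : ((3 + s * u : ℕ) : ℝ) * δ * (2 : ℕ) = 1 := by rw [hδ]; field_simp; norm_num
    rw [this, Real.rpow_one]
  have hτ : (v.natAbs.divisors.card : ℝ) ≤
      D * ((2 * B : ℝ) ^ δ * ((M : ℝ) ^ (3 + s * u)) ^ δ) := by
    refine (hD _ (by simpa using hv)).trans ?_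
    rw [← Real.mul_rpow (by positivity) (by positivity)]
    gcongr
    exact_mod_cast hvle
  calc _ ≤ ((2 * P.natDegree * v.natAbs.divisors.card ^ 2 : ℕ) : ℝ) := by
        refine Nat.cast_le.mpr (card_mul_eval_sub_eq_le hdeg _ _ ?_ hv)
        intro i hi j hj
        simp only [Finset.coe_Icc, Set.mem_Icc] at hi hj
        exact hm_distinct i j hi.1 hj.1
    _ ≤ 2 * P.natDegree * (D * ((2 * B : ℝ) ^ δ * ((M : ℝ) ^ (3 + s * u)) ^ δ)) ^ 2 := by
        push_cast
        gcongr
    _ = _ := by rw [← mul_assoc D, mul_pow _ (((M : ℝ) ^ (3 + s * u)) ^ δ), hpow]; ring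

/-- For almost all `α`, the discrepancy is large at every sufficiently large perfect `s`-th power.
-/
theorem ae_eventually_sqrt_le_starDisc {P : Polynomial ℤ} (hdeg : 2 ≤ P.natDegree)
    {m : ℕ → ℤ} (hm_distinct : ∀ i j : ℕ, 1 ≤ i → 1 ≤ j → m i = m j → i = j)
    {t : ℕ} (hm_growth : ∃ n₀ : ℕ, ∀ n : ℕ, n₀ ≤ n → |m n| ≤ (n : ℤ) ^ t) (s : ℕ) :
    ∀ᵐ α ∂(volume : Measure ℝ), ∀ᶠ M : ℕ in atTop, √((M : ℝ) ^ s / 2) ≤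
      2 * Real.pi * (M : ℝ) ^ 3 * ((M ^ s : ℕ) *
        starDisc (M ^ s) fun n => Int.fract (((P.eval (m n) : ℤ) : ℝ) * α)) := by
  rw [← Measure.restrict_univ (μ := (volume : Measure ℝ)), ← iUnion_Ioc_intCast,
    ae_restrict_iUnion_iff]
  intro k
  obtain ⟨C, hC⟩ := exists_volume_sum_norm_sq_le hdeg hm_distinct hm_growth s
  set bad : ℕ → Set ℝ := fun M => {α : ℝ | ∑ h ∈ Finset.Icc 1 (M ^ 3),
    ‖∑ n ∈ Finset.Icc 1 (M ^ s), unitExp (h * ((P.eval (m n) : ℤ) * α))‖ ^ 2 ≤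
      (M ^ 3 : ℕ) * (M ^ s : ℕ) / 2}
  have hsum : ∑' M, volume.restrict (Set.Ioc (k : ℝ) (k + 1)) (bad (M + 1)) ≠ ⊤ := by
    have hsummable : Summable fun M : ℕ => C * (1 / ((M + 1 : ℕ) : ℝ) ^ 2) :=
      ((summable_nat_add_iff 1).mpr (Real.summable_one_div_nat_pow.mpr one_lt_two)).mul_left C
    refine ne_top_of_le_ne_top hsummable.tsum_ofReal_ne_top (ENNReal.tsum_le_tsum fun M => ?_)
    exact hC (M + 1) (Nat.le_add_left 1 M) k
  filter_upwards [ae_eventually_notMem hsum] with α hα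
  rw [← map_add_atTop_eq_nat 1, eventually_map]
  filter_upwards [hα] with M' hM'
  set M := M' + 1
  have hM : 1 ≤ M := Nat.le_add_left 1 M'
  have hlt : ∑ _h ∈ Finset.Icc 1 (M ^ 3), (M : ℝ) ^ s / 2 < ∑ h ∈ Finset.Icc 1 (M ^ 3),
      ‖∑ n ∈ Finset.Icc 1 (M ^ s), unitExp (h * ((P.eval (m n) : ℤ) * α))‖ ^ 2 := by
    have := not_le.mp (Set.notMem_ofPred_iff.mp hM')
    simpa [mul_div_assoc] using this
  obtain ⟨h, hh, hlarge⟩ := Finset.exists_lt_of_sum_lt hlt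
  obtain ⟨hh1, hhM⟩ := Finset.mem_Icc.mp hh
  have hkoksma := norm_sum_unitExp_le_starDisc (Nat.one_le_pow s M hM) hh1
    (x := fun n => Int.fract (((P.eval (m n) : ℤ) : ℝ) * α))
    fun n => ⟨Int.fract_nonneg _, Int.fract_lt_one _⟩
  simp only [unitExp_natCast_mul_fract] at hkoksma
  refine (Real.sqrt_le_left (norm_nonneg _) |>.mpr hlarge.le).trans (hkoksma.trans ?_)
  have hdisc := (abs_nonneg _).trans (abs_card_div_sub_le_starDisc (M ^ s)
    (fun n => Int.fract (((P.eval (m n) : ℤ) : ℝ) * α)) (Set.right_mem_Ioc.mpr zero_lt_one))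
  gcongr
  exact_mod_cast hhM

theorem stmt6 (P : Polynomial ℤ) (hdeg : 2 ≤ P.natDegree)
    (m : ℕ → ℤ)
    (hm_distinct : ∀ i j : ℕ, 1 ≤ i → 1 ≤ j → m i = m j → i = j)
    (t : ℕ) (hm_growth : ∃ n₀ : ℕ, ∀ n : ℕ, n₀ ≤ n → |m n| ≤ (n : ℤ) ^ t) :
    ∀ᵐ α ∂(volume : Measure ℝ), ∀ ε > 0, ∃ᶠ N : ℕ in atTop,
      (N : ℝ) * starDisc N (fun n => Int.fract (((P.eval (m n) : ℤ) : ℝ) * α)) ≥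
        (N : ℝ) ^ ((1 : ℝ) / 2 - ε) := by
  filter_upwards [ae_all_iff.mpr
    (ae_eventually_sqrt_le_starDisc hdeg hm_distinct hm_growth)] with α hα ε hε
  obtain ⟨s, hs⟩ := exists_nat_gt (4 / ε)
  have hsε : 4 < s * ε := (div_lt_iff₀ hε).mp hs
  have hs0 : s ≠ 0 := by
    rintro rfl
    norm_num at hsε
  refine (tendsto_pow_atTop hs0 : Tendsto (fun M : ℕ => M ^ s) atTop atTop).frequently
    (Eventually.frequently ?_)
  filter_upwards [hα s, eventually_ge_atTop 16] with M hM hM16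
  have hM16' : (16 : ℝ) ≤ M := by exact_mod_cast hM16
  have hMpos : (0 : ℝ) < M := by linarith
  have hfactor : 0 < 2 * Real.pi * (M : ℝ) ^ 3 := by positivity
  refine le_of_mul_le_mul_left (le_trans (Real.le_sqrt_of_sq_le ?_) hM) hfactor
  have hpow : (((M ^ s : ℕ) : ℝ) ^ ((1 : ℝ) / 2 - ε)) ^ 2 * (M : ℝ) ^ 8 ≤ (M : ℝ) ^ s := by
    push_cast
    rw [← Real.rpow_natCast, ← Real.rpow_natCast, ← Real.rpow_natCast, ← Real.rpow_mul hMpos.le,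
      ← Real.rpow_mul hMpos.le, ← Real.rpow_add hMpos]
    refine Real.rpow_le_rpow_of_exponent_le (by linarith) ?_
    push_cast
    linarith
  set y := (((M ^ s : ℕ) : ℝ) ^ ((1 : ℝ) / 2 - ε)) ^ 2
  have hπ : (2 * Real.pi) ^ 2 * 2 ≤ (M : ℝ) ^ 2 := by
    have h1 : 2 * Real.pi ≤ 8 := by linarith [Real.pi_le_four]
    have h2 : (2 * Real.pi) ^ 2 ≤ 8 ^ 2 := by gcongr
    nlinarith
  calc _ = (2 * Real.pi) ^ 2 * 2 * (y * (M : ℝ) ^ 6) / 2 := by simp only [y]; ring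
    _ ≤ (M : ℝ) ^ 2 * (y * (M : ℝ) ^ 6) / 2 := by gcongr
    _ = y * (M : ℝ) ^ 8 / 2 := by ring
    _ ≤ _ := by gcongr
end

section
/- Let (a_n)_{n≥1} be the sequence of Rudin–Shapiro integers. Then the additive energy of its initial segments is of maximal possible order: there exists a constant c > 0 such that E({a_1, …, a_N}) ≥ c·N³ for all N ≥ 1. -/
open Filter MeasureTheory

/-- Number of occurrences of the block `11` in a list of binary digits. -/
def pairs11 : List ℕ → ℕ
  | a :: b :: rest => (if a = 1 ∧ b = 1 then 1 else 0) + pairs11 (b :: rest)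
  | _ => 0

/-- The Rudin–Shapiro sequence: `rs k = 1` if the number of `11`-blocks in the binary
representation of `k` is even, and `rs k = -1` otherwise. -/
def rs (k : ℕ) : ℤ := if pairs11 (Nat.digits 2 k) % 2 = 0 then 1 else -1

/-- The `n`-th Rudin–Shapiro integer (indexed from `n = 1`): the increasing enumeration
of `{k : rs k = 1}`, so `rsInt 1 = 0`, `rsInt 2 = 1`, `rsInt 3 = 2`, `rsInt 4 = 4`, ... -/
noncomputable def rsInt (n : ℕ) : ℕ := Nat.nth (fun k => rs k = 1) (n - 1)

/-- Additive energy of a finite set of integers. -/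
def addEnergy (A : Finset ℤ) : ℕ :=
  ((A ×ˢ A ×ˢ A ×ˢ A).filter fun p => p.1 - p.2.1 = p.2.2.1 - p.2.2.2).card

open scoped Pointwise

/-- Among `4 * q + 2` and `4 * q + 3`, one is a Rudin–Shapiro integer. -/
theorem rs_four_mul_add_two_or_three (q : ℕ) : rs (4 * q + 2) = 1 ∨ rs (4 * q + 3) = 1 := by
  have h1 : Nat.digits 2 (2 * q + 1) = 1 :: Nat.digits 2 q := by
    rw [Nat.digits_def' (by norm_num) (by omega)]
    congr 2 <;> omega
  have h2 : Nat.digits 2 (4 * q + 2) = 0 :: 1 :: Nat.digits 2 q := by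
    rw [Nat.digits_def' (by norm_num) (by omega), ← h1]
    congr 2 <;> omega
  have h3 : Nat.digits 2 (4 * q + 3) = 1 :: 1 :: Nat.digits 2 q := by
    rw [Nat.digits_def' (by norm_num) (by omega), ← h1]
    congr 2 <;> omega
  simp only [rs, h2, h3, pairs11]
  split_ifs <;> simp_all
  omega

theorem le_count_rs_four_mul (n : ℕ) : n ≤ Nat.count (fun k => rs k = 1) (4 * n) := by
  induction n with
  | zero => simp
  | succ q ih =>
    have h := rs_four_mul_add_two_or_three q
    rw [show 4 * (q + 1) = 4 * q + 1 + 1 + 1 + 1 by ring]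
    simp only [Nat.count_succ]
    rcases h with h | h <;> simp only [h, if_true] <;> omega

theorem infinite_setOf_rs_eq_one : {k | rs k = 1}.Infinite := by
  refine Set.infinite_of_forall_exists_gt fun a => ?_
  rcases rs_four_mul_add_two_or_three a with h | h
  · exact ⟨_, h, by omega⟩
  · exact ⟨_, h, by omega⟩

theorem rsInt_lt_four_mul {n : ℕ} (hn : 1 ≤ n) : rsInt n < 4 * n :=
  Nat.nth_lt_of_lt_count (by have := le_count_rs_four_mul n; omega)

theorem injOn_rsInt : Set.InjOn rsInt (Set.Ici 1) := by
  intro a ha b hb hab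
  have := Nat.nth_injective infinite_setOf_rs_eq_one hab
  simp only [Set.mem_Ici] at ha hb
  omega

theorem finset_addEnergy_le_addEnergy (A : Finset ℤ) : Finset.addEnergy A A ≤ addEnergy A := by
  refine Finset.card_le_card_of_injOn (fun x => (x.1.1, x.1.2, x.2.2, x.2.1)) ?_ ?_
  · intro x hx
    simp only [Finset.coe_filter, Finset.mem_product, Set.mem_ofPred_eq] at hx ⊢
    refine ⟨by tauto, by omega⟩
  · rintro ⟨⟨a, b⟩, c, d⟩ - ⟨⟨a', b'⟩, c', d'⟩ - h
    simp only [Prod.mk.injEq] at h ⊢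
    tauto

theorem stmt7 : ∃ c : ℝ, 0 < c ∧ ∀ N : ℕ, 1 ≤ N →
    c * (N : ℝ) ^ 3 ≤ (addEnergy ((Finset.Icc 1 N).image fun n => (rsInt n : ℤ)) : ℝ) := by
  refine ⟨1 / 8, by norm_num, fun N hN => ?_⟩
  set A := (Finset.Icc 1 N).image fun n => (rsInt n : ℤ) with hA
  have hcard : A.card = N := by
    rw [hA, Finset.card_image_of_injOn, Nat.card_Icc, Nat.add_sub_cancel]
    intro a ha b hb hab
    simp only [Finset.coe_Icc, Set.mem_Icc] at ha hb
    exact injOn_rsInt ha.1 hb.1 (Int.ofNat.inj hab)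
  have hmem : ∀ x ∈ A, 0 ≤ x ∧ x < 4 * N := by
    intro x hx
    obtain ⟨n, hn, rfl⟩ := Finset.mem_image.1 hx
    rw [Finset.mem_Icc] at hn
    have := rsInt_lt_four_mul hn.1
    omega
  have hsum : (A + A).card ≤ 8 * N := by
    have hsub : A + A ⊆ Finset.Ico (0 : ℤ) (8 * N) := by
      intro z hz
      obtain ⟨x, hx, y, hy, rfl⟩ := Finset.mem_add.1 hz
      have := hmem x hx
      have := hmem y hy
      rw [Finset.mem_Ico]
      omega
    have := Finset.card_le_card hsub
    rw [Int.card_Ico] at this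
    omega
  have henergy : N ^ 2 * N ^ 2 ≤ 8 * N * addEnergy A := by
    have h := Finset.le_card_add_mul_addEnergy A A
    rw [hcard] at h
    exact h.trans (Nat.mul_le_mul hsum (finset_addEnergy_le_addEnergy A))
  have hcube : N ^ 3 ≤ 8 * addEnergy A := by
    refine Nat.le_of_mul_le_mul_left (c := N) ?_ hN
    linarith
  have : (N : ℝ) ^ 3 ≤ 8 * addEnergy A := by exact_mod_cast hcube
  linarith
end

section
/- Let A > 0 and B > 0, and let (R_L)_{L≥0} be a sequence of measurable subsets of [0,1) such that the Lebesgue measure satisfies P(R_L) ≥ B^{−L} for all L, and such that each R_L is a disjoint union of at most A^{L²} intervals. Then for Lebesgue-almost all α ∈ [0,1), for every η > 0 there are infinitely many L for which there exists a positive integer h_L with h_L ≤ (1+η)^L / P(R_L) and {h_L α} ∈ R_L. -/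
open Filter MeasureTheory

open AddCircle in
theorem measurePreserving_nsmul_haarAddCircle {p : ℕ} (hp : p ≠ 0) :
    MeasurePreserving (fun x : UnitAddCircle => p • x) haarAddCircle haarAddCircle := by
  simpa only [natCast_zsmul] using
    Measure.measurePreserving_zsmul (haarAddCircle (T := 1)) (n := (p : ℤ))
      (by exact_mod_cast hp)

open AddCircle in
theorem fourierCoeff_comp_nsmul_of_mul {f : UnitAddCircle → ℂ}
    (hf : AEStronglyMeasurable f haarAddCircle) {p : ℕ} (hp : p ≠ 0) (k : ℤ) :
    fourierCoeff (fun x => f (p • x)) (p * k) = fourierCoeff f k := by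
  have hmp := measurePreserving_nsmul_haarAddCircle hp
  have hint : AEStronglyMeasurable (fun x : UnitAddCircle => fourier (-k) x • f x)
      haarAddCircle := (fourier (-k)).continuous.aestronglyMeasurable.smul hf
  unfold fourierCoeff
  conv_rhs => rw [← hmp.map_eq]
  rw [integral_map hmp.measurable.aemeasurable (by rwa [hmp.map_eq])]
  refine integral_congr_ae (.of_forall fun x => ?_)
  dsimp only
  congr 1
  rw [fourier_apply, fourier_apply, ← natCast_zsmul x p, smul_smul]
  congr 3
  ring

open AddCircle in
theorem fourierCoeff_comp_nsmul_of_not_dvd (f : UnitAddCircle → ℂ)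
    {p : ℕ} (hp : p ≠ 0) {n : ℤ} (hn : ¬ (p : ℤ) ∣ n) :
    fourierCoeff (fun x => f (p • x)) n = 0 := by
  unfold fourierCoeff
  have hp' : (p : ℝ) ≠ 0 := by exact_mod_cast hp
  set t : UnitAddCircle := ((1 / p : ℝ) : UnitAddCircle) with ht
  have hpt : p • t = 0 := by
    rw [ht, ← AddCircle.coe_nsmul, nsmul_eq_mul, mul_one_div_cancel hp']
    exact AddCircle.coe_period 1
  have hshift : ∀ x : UnitAddCircle, fourier (-n) (x + t) • f (p • (x + t)) =
      fourier (-n) t * (fourier (-n) x • f (p • x)) := by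
    intro x
    rw [smul_add, hpt, add_zero, fourier_apply, smul_add, toCircle_add]
    simp only [fourier_apply, smul_eq_mul, Circle.coe_mul]
    ring
  have key : ∫ x : UnitAddCircle, fourier (-n) x • f (p • x) ∂haarAddCircle =
      fourier (-n) t * ∫ x : UnitAddCircle, fourier (-n) x • f (p • x) ∂haarAddCircle := by
    rw [← integral_const_mul, ← integral_add_right_eq_self _ t]
    exact integral_congr_ae (.of_forall hshift)
  have hne : fourier (-n) t ≠ (1 : ℂ) := by
    intro h
    rw [ht, fourier_coe_apply, Complex.exp_eq_one_iff] at h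
    obtain ⟨k, hk⟩ := h
    apply hn
    refine ⟨-k, ?_⟩
    have hp'' : (p : ℂ) ≠ 0 := by exact_mod_cast hp
    have hpi := Complex.two_pi_I_ne_zero
    push_cast at hk
    have : ((n : ℤ) : ℂ) = ((p * -k : ℤ) : ℂ) := by
      push_cast
      apply mul_right_cancel₀ hpi
      field_simp at hk
      linear_combination (-2 * Real.pi * Complex.I) * hk
    exact_mod_cast this
  by_contra h0
  exact hne (mul_right_cancel₀ h0 (by rw [one_mul]; exact key.symm))

theorem card_filter_dvd_mul_le {H : Finset ℕ} (hH : ∀ p ∈ H, p.Prime) {p : ℕ} (hp : p.Prime)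
    (n : ℤ) : (H.filter fun q : ℕ => (q : ℤ) ∣ p * n).card ≤
      1 + (H.filter fun q : ℕ => (q : ℤ) ∣ n).card := by
  have hsub : (H.filter fun q : ℕ => (q : ℤ) ∣ p * n) ⊆
      insert p (H.filter fun q : ℕ => (q : ℤ) ∣ n) := by
    intro q hq
    rw [Finset.mem_filter] at hq
    rw [Finset.mem_insert, Finset.mem_filter]
    rcases (Nat.prime_iff_prime_int.mp (hH q hq.1)).dvd_or_dvd hq.2 with h | h
    · exact .inl ((Nat.prime_dvd_prime_iff_eq (hH q hq.1) hp).mp (by exact_mod_cast h))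
    · exact .inr ⟨hq.1, h⟩
  have := (Finset.card_le_card hsub).trans (Finset.card_insert_le _ _)
  omega

open AddCircle in
theorem hasSum_sq_fourierCoeff_of_memLp {f : UnitAddCircle → ℂ} (hf : MemLp f 2 haarAddCircle) :
    HasSum (fun n => ‖fourierCoeff f n‖ ^ 2) (∫ x, ‖f x‖ ^ 2 ∂haarAddCircle) := by
  have h := hasSum_sq_fourierCoeff hf.toLp
  rw [fourierCoeff_congr_ae hf.coeFn_toLp] at h
  convert h using 1
  refine integral_congr_ae ?_
  filter_upwards [hf.coeFn_toLp] with x hx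
  rw [hx]

open AddCircle in
/-- An `L²` bound for sums of prime dilates: the sum over the primes of `H` of the functions
`x ↦ f (p • x)` is controlled by the Fourier coefficients of `f`, weighted by the number of
prime divisors in `H` of the frequency. -/
theorem integral_sq_sum_comp_nsmul_le {f : UnitAddCircle → ℂ} (hf : MemLp f 2 haarAddCircle)
    {H : Finset ℕ} (hH : ∀ p ∈ H, p.Prime) :
    ∫ x, ‖∑ p ∈ H, f (p • x)‖ ^ 2 ∂haarAddCircle ≤
      H.card * ∑' n : ℤ, (1 + ((H.filter fun q : ℕ => (q : ℤ) ∣ n).card : ℝ)) *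
        ‖fourierCoeff f n‖ ^ 2 := by
  set ω : ℤ → ℝ := fun n => ((H.filter fun q : ℕ => (q : ℤ) ∣ n).card : ℝ) with hω
  have hcomp : ∀ p ∈ H, MemLp (fun x : UnitAddCircle => f (p • x)) 2 haarAddCircle :=
    fun p hp =>
      hf.comp_measurePreserving (measurePreserving_nsmul_haarAddCircle (hH p hp).ne_zero)
  have hP := hasSum_sq_fourierCoeff_of_memLp (memLp_finsetSum H hcomp)
  have hPf := (hasSum_sq_fourierCoeff_of_memLp hf).summable
  have hωle : ∀ n, ω n ≤ H.card := fun n =>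
    Nat.cast_le.mpr (Finset.card_filter_le _ _)
  have hωnn : ∀ n, 0 ≤ ω n := fun n => Nat.cast_nonneg _
  have hsum1 : Summable fun n => (1 + ω n) * ‖fourierCoeff f n‖ ^ 2 := by
    refine Summable.of_nonneg_of_le (fun n => ?_) (fun n => ?_) (hPf.mul_left (1 + (H.card : ℝ)))
    · have := hωnn n
      positivity
    · have := hωle n
      gcongr
  have hsum2 : ∀ p ∈ H, Summable fun n : ℤ => ω (p * n) * ‖fourierCoeff f n‖ ^ 2 := fun p _ => by
    refine Summable.of_nonneg_of_le (fun n => ?_) (fun n => ?_) (hPf.mul_left (H.card : ℝ))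
    · have := hωnn (p * n)
      positivity
    · have := hωle (p * n)
      gcongr
  have hle2 : ∀ p ∈ H, ∑' n : ℤ, ω (p * n) * ‖fourierCoeff f n‖ ^ 2 ≤
      ∑' n : ℤ, (1 + ω n) * ‖fourierCoeff f n‖ ^ 2 := fun p hp => by
    refine (hsum2 p hp).tsum_le_tsum (fun n => ?_) hsum1
    have h : ω (p * n) ≤ 1 + ω n := by
      simp only [hω]
      exact_mod_cast card_filter_dvd_mul_le hH (hH p hp) n
    gcongr
  set F : ℕ → ℤ → ℝ := fun p m =>
    if (p : ℤ) ∣ m then ω m * ‖fourierCoeff f (m / p)‖ ^ 2 else 0 with hF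
  have hFsum : ∀ p ∈ H, HasSum (F p) (∑' n : ℤ, ω (p * n) * ‖fourierCoeff f n‖ ^ 2) := by
    intro p hp
    have hp0 : (p : ℤ) ≠ 0 := by exact_mod_cast (hH p hp).ne_zero
    have hinj : Function.Injective fun n : ℤ => (p : ℤ) * n := mul_right_injective₀ hp0
    rw [← hinj.hasSum_iff]
    · convert (hsum2 p hp).hasSum using 1
      funext n
      simp [hF, Int.mul_ediv_cancel_left n hp0]
    · intro m hm
      simp only [hF]
      rw [if_neg]
      rintro ⟨n, rfl⟩
      exact hm ⟨n, rfl⟩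
  have hpt : ∀ m : ℤ, ‖fourierCoeff (fun x => ∑ p ∈ H, f (p • x)) m‖ ^ 2 ≤ ∑ p ∈ H, F p m := by
    intro m
    have h1 : fourierCoeff (fun x => ∑ p ∈ H, f (p • x)) m =
        ∑ p ∈ H.filter (fun q : ℕ => (q : ℤ) ∣ m), fourierCoeff f (m / p) := by
      have := congrFun (fourierCoeff.sum H (fun p x => f (p • x))
        (fun p hp => (hcomp p hp).integrable one_le_two)) m
      rw [Finset.sum_apply] at this
      rw [Finset.sum_filter]
      convert this using 1
      · congr 1
        funext x
        simp
      · refine Finset.sum_congr rfl fun p hp => ?_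
        split_ifs with hd
        · obtain ⟨k, rfl⟩ := hd
          rw [fourierCoeff_comp_nsmul_of_mul hf.1 (hH p hp).ne_zero,
            Int.mul_ediv_cancel_left _ (by exact_mod_cast (hH p hp).ne_zero)]
        · rw [fourierCoeff_comp_nsmul_of_not_dvd _ (hH p hp).ne_zero hd]
    rw [h1]
    calc _ ≤ (∑ p ∈ H.filter (fun q : ℕ => (q : ℤ) ∣ m), ‖fourierCoeff f (m / p)‖) ^ 2 := by
          gcongr
          exact norm_sum_le _ _
      _ ≤ ω m * ∑ p ∈ H.filter (fun q : ℕ => (q : ℤ) ∣ m), ‖fourierCoeff f (m / p)‖ ^ 2 :=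
          sq_sum_le_card_mul_sum_sq
      _ = ∑ p ∈ H, F p m := by
          rw [Finset.mul_sum, Finset.sum_filter]
  calc _ ≤ ∑ p ∈ H, ∑' n : ℤ, ω (p * n) * ‖fourierCoeff f n‖ ^ 2 :=
        hasSum_le hpt hP (hasSum_sum hFsum)
    _ ≤ ∑ p ∈ H, ∑' n : ℤ, (1 + ω n) * ‖fourierCoeff f n‖ ^ 2 := Finset.sum_le_sum hle2
    _ = _ := by rw [Finset.sum_const, nsmul_eq_mul]

theorem card_filter_dvd_le_log {H : Finset ℕ} (hH : ∀ p ∈ H, p.Prime) {n : ℤ} (hn : n ≠ 0) :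
    ((H.filter fun q : ℕ => (q : ℤ) ∣ n).card : ℝ) ≤ 2 * Real.log |(n : ℝ)| := by
  set D := H.filter fun q : ℕ => (q : ℤ) ∣ n with hD
  have hn' : n.natAbs ≠ 0 := Int.natAbs_ne_zero.mpr hn
  have hsub : D ⊆ n.natAbs.primeFactors := by
    intro q hq
    rw [hD, Finset.mem_filter] at hq
    exact Nat.mem_primeFactors.mpr ⟨hH q hq.1, Int.natCast_dvd.mp hq.2, hn'⟩
  have h2 : 2 ^ D.card ≤ n.natAbs := by
    calc 2 ^ D.card ≤ 2 ^ n.natAbs.primeFactors.card :=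
          Nat.pow_le_pow_right two_pos (Finset.card_le_card hsub)
      _ ≤ ∏ p ∈ n.natAbs.primeFactors, p :=
          Finset.pow_card_le_prod _ _ _ fun p hp => (Nat.prime_of_mem_primeFactors hp).two_le
      _ ≤ n.natAbs := Nat.le_of_dvd (Nat.pos_of_ne_zero hn') (Nat.prod_primeFactors_dvd _)
  have h3 : (2 : ℝ) ^ D.card ≤ |(n : ℝ)| := by
    rw [← Int.cast_abs, ← Nat.cast_natAbs]
    exact_mod_cast h2
  have h4 := Real.log_le_log (by positivity) h3
  rw [Real.log_pow] at h4
  have h5 := Real.log_two_gt_d9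
  have h6 : (0 : ℝ) ≤ D.card := Nat.cast_nonneg _
  nlinarith

theorem log_le_two_mul_log_add {x T : ℝ} (hx : 0 < x) (hT : 0 < T) :
    Real.log x ≤ 2 * Real.log T + 2 * √x / T := by
  have h1 : Real.log (√x / T) ≤ √x / T :=
    (Real.log_le_sub_one_of_pos (by positivity)).trans (by linarith)
  rw [Real.log_div (by positivity) hT.ne', Real.log_sqrt hx.le] at h1
  linarith [mul_div_assoc 2 (√x) T]

theorem norm_setIntegral_exp_le {I : Set ℝ} (hI : I.OrdConnected) (hsub : I ⊆ Set.Ico 0 1)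
    {n : ℤ} (hn : n ≠ 0) :
    ‖∫ x in I, Complex.exp (-(2 * Real.pi * Complex.I * n) * (x : ℂ))‖ ≤ 1 / |(n : ℝ)| := by
  have hn' : (0 : ℝ) < |(n : ℝ)| := abs_pos.mpr (by exact_mod_cast hn)
  rcases I.eq_empty_or_nonempty with rfl | hne
  · simp
  have hbb : BddBelow I := bddBelow_Ico.mono hsub
  have hba : BddAbove I := bddAbove_Ico.mono hsub
  set a := sInf I
  set b := sSup I
  have hab : a ≤ b := csInf_le_csSup hne hbb hba
  have h1 : Set.Ioo a b ⊆ I := IsConnected.Ioo_csInf_csSup_subset ⟨hne, hI.isPreconnected⟩ hbb hba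
  have h2 : I ⊆ Set.Icc a b := subset_Icc_csInf_csSup hbb hba
  have hae : I =ᵐ[volume] Set.Ioc a b := by
    refine Filter.EventuallyLE.antisymm ?_ ?_
    · exact h2.eventuallyLE.trans Ioc_ae_eq_Icc.symm.le
    · exact Ioo_ae_eq_Ioc.symm.le.trans h1.eventuallyLE
  set c : ℂ := -(2 * Real.pi * Complex.I * n) with hc
  have hcn : ‖c‖ = 2 * Real.pi * |(n : ℝ)| := by
    simp [hc, abs_of_pos Real.pi_pos]
  have hc0 : c ≠ 0 := by
    rw [← norm_pos_iff, hcn]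
    have := Real.pi_pos
    positivity
  have hexp : ∀ t : ℝ, ‖Complex.exp (c * t)‖ = 1 := by
    intro t
    rw [Complex.norm_exp]
    simp [hc]
  rw [setIntegral_congr_set hae, ← intervalIntegral.integral_of_le hab,
    integral_exp_mul_complex hc0, norm_div, hcn, div_le_div_iff₀ (by positivity) hn', one_mul]
  have h3 : ‖Complex.exp (c * b) - Complex.exp (c * a)‖ ≤ 2 := by
    refine (norm_sub_le _ _).trans ?_
    rw [hexp, hexp]
    norm_num
  have := Real.pi_gt_three
  nlinarith

theorem fourierCoeff_liftIco_indicator {R : Set ℝ} (hm : MeasurableSet R)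
    (hsub : R ⊆ Set.Ico 0 1) (n : ℤ) :
    fourierCoeff (AddCircle.liftIco (1 : ℝ) 0 (R.indicator fun _ => (1 : ℂ))) n =
      ∫ x in R, Complex.exp (-(2 * Real.pi * Complex.I * n) * (x : ℂ)) := by
  rw [fourierCoeff_liftIco_eq, fourierCoeffOn_eq_integral,
    intervalIntegral.integral_of_le (by norm_num), zero_add, sub_zero, div_one, one_smul,
    setIntegral_congr_set Ico_ae_eq_Ioc.symm]
  rw [← Set.inter_eq_right.mpr hsub, ← setIntegral_indicator hm]
  refine setIntegral_congr_fun measurableSet_Ico fun x _ => ?_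
  by_cases hx : x ∈ R
  · simp only [Set.inter_eq_right.mpr hsub, Set.indicator_of_mem hx]
    rw [fourier_coe_apply]
    simp
  · simp only [Set.inter_eq_right.mpr hsub, Set.indicator_of_notMem hx, smul_zero]

theorem norm_fourierCoeff_liftIco_indicator_le {R : Set ℝ} (hsub : R ⊆ Set.Ico 0 1)
    {k : ℕ} {I : Fin k → Set ℝ} (hI : ∀ i, (I i).OrdConnected)
    (hdisj : Pairwise fun i j => Disjoint (I i) (I j)) (hR : R = ⋃ i, I i)
    {n : ℤ} (hn : n ≠ 0) :
    ‖fourierCoeff (AddCircle.liftIco (1 : ℝ) 0 (R.indicator fun _ => (1 : ℂ))) n‖ ≤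
      k / |(n : ℝ)| := by
  have hmI : ∀ i, MeasurableSet (I i) := fun i => (hI i).measurableSet
  have hmR : MeasurableSet R := hR ▸ MeasurableSet.iUnion hmI
  have hIsub : ∀ i, I i ⊆ Set.Ico 0 1 := fun i =>
    (Set.subset_iUnion I i).trans (hR ▸ hsub)
  have hcont : Continuous fun x : ℝ =>
      Complex.exp (-(2 * Real.pi * Complex.I * n) * (x : ℂ)) := by fun_prop
  rw [fourierCoeff_liftIco_indicator hmR hsub, hR, integral_iUnion_fintype hmI hdisj fun i =>
    (hcont.integrableOn_Icc (a := 0) (b := 1)).mono_set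
      ((hIsub i).trans Set.Ico_subset_Icc_self)]
  refine (norm_sum_le _ _).trans ?_
  calc _ ≤ ∑ _i : Fin k, 1 / |(n : ℝ)| :=
        Finset.sum_le_sum fun i _ => norm_setIntegral_exp_le (hI i) (hIsub i) hn
    _ = _ := by simp [div_eq_mul_inv]

theorem measurableSet_setOf_equivIco_mem {R : Set ℝ} (hm : MeasurableSet R) :
    MeasurableSet {x : UnitAddCircle | (AddCircle.equivIco (1 : ℝ) 0 x : ℝ) ∈ R} :=
  (measurable_subtype_coe.comp (AddCircle.measurableEquivIco (1 : ℝ) 0).measurable) hm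

theorem liftIco_indicator_one (R : Set ℝ) :
    AddCircle.liftIco (1 : ℝ) 0 (R.indicator fun _ => (1 : ℂ)) =
      {x : UnitAddCircle | (AddCircle.equivIco (1 : ℝ) 0 x : ℝ) ∈ R}.indicator fun _ => 1 :=
  rfl

open AddCircle in
/-- The set of points none of whose prime multiples, for primes in `H`, hits a union of `k`
intervals of total length `m`, has measure at most `O(1 + log (k² / m)) / (#H * m)`. -/
theorem measureReal_forall_nsmul_notMem_le {R : Set ℝ} (hsub : R ⊆ Set.Ico 0 1)
    {k : ℕ} {I : Fin k → Set ℝ} (hI : ∀ i, (I i).OrdConnected)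
    (hdisj : Pairwise fun i j => Disjoint (I i) (I j)) (hR : R = ⋃ i, I i)
    (hpos : 0 < volume.real R) {H : Finset ℕ} (hH : ∀ p ∈ H, p.Prime) (hne : H.Nonempty) :
    haarAddCircle.real {x : UnitAddCircle |
        ∀ p ∈ H, (equivIco (1 : ℝ) 0 (p • x) : ℝ) ∉ R} ≤
      (1 + 4 * (∑' n : ℤ, |(n : ℝ)| ^ (-(3 / 2) : ℝ)) +
        4 * Real.log (k ^ 2 / volume.real R)) / (H.card * volume.real R) := by
  have hmR : MeasurableSet R := hR ▸ MeasurableSet.iUnion fun i => (hI i).measurableSet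
  set m := volume.real R with hm
  set S : Set UnitAddCircle := {x | (equivIco (1 : ℝ) 0 x : ℝ) ∈ R} with hS
  have hmS : MeasurableSet S := measurableSet_setOf_equivIco_mem hmR
  set f : UnitAddCircle → ℂ := S.indicator fun _ => 1 with hf
  set C := ∑' n : ℤ, |(n : ℝ)| ^ (-(3 / 2) : ℝ)
  have hm1 : m ≤ 1 := by
    calc m ≤ volume.real (Set.Ico (0 : ℝ) 1) := measureReal_mono hsub (by simp)
      _ = 1 := by simp
  have hk : (1 : ℝ) ≤ k := by
    have : k ≠ 0 := by
      rintro rfl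
      simp [hm, hR] at hpos
    exact_mod_cast Nat.one_le_iff_ne_zero.mpr this
  set T : ℝ := k ^ 2 / m with hT
  have hTpos : 0 < T := by positivity
  have hlogT : 0 ≤ Real.log T := by
    apply Real.log_nonneg
    rw [hT, le_div_iff₀ hpos]
    nlinarith
  have hf0 : fourierCoeff f 0 = m := by
    have := fourierCoeff_liftIco_indicator hmR hsub 0
    rw [liftIco_indicator_one] at this
    rw [hf, hS, this]
    simp [hm]
  have hSm : (haarAddCircle (T := 1)).real S = m := by
    have h : fourierCoeff f 0 = ((haarAddCircle (T := 1)).real S : ℂ) := by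
      simp [fourierCoeff, hf, integral_indicator hmS]
    rw [hf0] at h
    exact_mod_cast h.symm
  have hfL : MemLp f 2 (haarAddCircle (T := 1)) :=
    memLp_indicator_const 2 hmS 1 (.inr (measure_ne_top _ _))
  have hPf : HasSum (fun n => ‖fourierCoeff f n‖ ^ 2) m := by
    convert hasSum_sq_fourierCoeff_of_memLp hfL
    have : (fun x => ‖f x‖ ^ 2) = S.indicator fun _ => (1 : ℝ) := by
      funext x
      by_cases hx : x ∈ S <;> simp [hf, hx]
    rw [this, integral_indicator hmS]
    simp [hSm]
  set g : UnitAddCircle → ℂ := fun x => f x - m with hg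
  have hgL : MemLp g 2 (haarAddCircle (T := 1)) := hfL.sub (memLp_const _)
  have hgcoeff : ∀ n, fourierCoeff g n = if n = 0 then 0 else fourierCoeff f n := by
    intro n
    have hconst : fourierCoeff (fun _ : UnitAddCircle => (m : ℂ)) n =
        if n = 0 then (m : ℂ) else 0 := by
      have h1 := fourierCoeff.const_mul (T := 1) (fun x : UnitAddCircle => fourier 0 x) (m : ℂ) n
      rw [fourierCoeff_fourier] at h1
      simpa [Pi.single_apply] using h1
    have h2 : fourierCoeff g n =
        fourierCoeff f n - fourierCoeff (fun _ : UnitAddCircle => (m : ℂ)) n := by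
      unfold fourierCoeff
      rw [← integral_sub ((hfL.integrable one_le_two).fourier_smul _)
        ((integrable_const _).fourier_smul _)]
      simp [hg, mul_sub]
    rw [h2, hconst]
    split_ifs with h
    · rw [h, hf0, sub_self]
    · rw [sub_zero]
  have hsumC : Summable fun n : ℤ => |(n : ℝ)| ^ (-(3 / 2) : ℝ) :=
    Real.summable_abs_int_rpow (by norm_num)
  have hterm : ∀ n : ℤ, (1 + ((H.filter fun q : ℕ => (q : ℤ) ∣ n).card : ℝ)) *
      ‖fourierCoeff g n‖ ^ 2 ≤ (1 + 4 * Real.log T) * ‖fourierCoeff f n‖ ^ 2 +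
        4 * m * |(n : ℝ)| ^ (-(3 / 2) : ℝ) := by
    intro n
    rw [hgcoeff]
    split_ifs with hn
    · simp only [norm_zero]
      have : 0 ≤ |(n : ℝ)| ^ (-(3 / 2) : ℝ) := by positivity
      simp only [ne_eq, OfNat.ofNat_ne_zero, not_false_eq_true, zero_pow, mul_zero]
      positivity
    have hn' : (0 : ℝ) < |(n : ℝ)| := abs_pos.mpr (by exact_mod_cast hn)
    have hcard := card_filter_dvd_le_log hH hn
    have hlog := log_le_two_mul_log_add hn' hTpos
    have hcoef : ‖fourierCoeff f n‖ ≤ k / |(n : ℝ)| :=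
      norm_fourierCoeff_liftIco_indicator_le hsub hI hdisj hR hn
    calc _ ≤ (1 + 4 * Real.log T + 4 * √|(n : ℝ)| / T) * ‖fourierCoeff f n‖ ^ 2 := by
          refine mul_le_mul_of_nonneg_right ?_ (by positivity)
          have := mul_div_assoc 2 (√|(n : ℝ)|) T
          have := mul_div_assoc 4 (√|(n : ℝ)|) T
          linarith
      _ = (1 + 4 * Real.log T) * ‖fourierCoeff f n‖ ^ 2 +
            4 * √|(n : ℝ)| / T * ‖fourierCoeff f n‖ ^ 2 := by ring
      _ ≤ (1 + 4 * Real.log T) * ‖fourierCoeff f n‖ ^ 2 +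
            4 * √|(n : ℝ)| / T * (k / |(n : ℝ)|) ^ 2 := by gcongr
      _ = _ := by
          congr 1
          have h32 : |(n : ℝ)| ^ (-(3 / 2) : ℝ) = √|(n : ℝ)| / |(n : ℝ)| ^ 2 := by
            rw [Real.sqrt_eq_rpow, ← Real.rpow_natCast, ← Real.rpow_sub hn']
            norm_num
          rw [h32, hT]
          field_simp
  have hsumR := (hPf.mul_left (1 + 4 * Real.log T)).add (hsumC.hasSum.mul_left (4 * m))
  have htsum : ∑' n : ℤ, (1 + ((H.filter fun q : ℕ => (q : ℤ) ∣ n).card : ℝ)) *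
      ‖fourierCoeff g n‖ ^ 2 ≤ (1 + 4 * C + 4 * Real.log T) * m := by
    refine (Summable.of_nonneg_of_le (fun n => by positivity) hterm
      hsumR.summable).tsum_le_tsum hterm hsumR.summable |>.trans_eq ?_
    rw [hsumR.tsum_eq]
    ring
  have hL2 := integral_sq_sum_comp_nsmul_le hgL hH
  have hHpos : (0 : ℝ) < H.card := by exact_mod_cast hne.card_pos
  have hint : Integrable (fun x => ‖∑ p ∈ H, g (p • x)‖ ^ 2) (haarAddCircle (T := 1)) :=
    (memLp_finsetSum H fun p hp => hgL.comp_measurePreserving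
      (measurePreserving_nsmul_haarAddCircle (hH p hp).ne_zero)).integrable_norm_pow two_ne_zero
  have hcheb := mul_meas_ge_le_integral_of_nonneg (μ := haarAddCircle (T := 1))
    (.of_forall fun x => by positivity) hint ((H.card * m) ^ 2)
  have hmono : (haarAddCircle (T := 1)).real {x : UnitAddCircle |
      ∀ p ∈ H, (equivIco (1 : ℝ) 0 (p • x) : ℝ) ∉ R} ≤ (haarAddCircle (T := 1)).real
        {x | (H.card * m) ^ 2 ≤ ‖∑ p ∈ H, g (p • x)‖ ^ 2} := by
    refine measureReal_mono (fun x hx => ?_) (measure_ne_top _ _)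
    have h1 : ∑ p ∈ H, g (p • x) = -(H.card * m : ℝ) := by
      have h2 : ∀ p ∈ H, g (p • x) = -(m : ℂ) := by
        intro p hp
        have h3 : p • x ∉ S := hx p hp
        simp [hg, hf, h3]
      rw [Finset.sum_congr rfl h2, Finset.sum_const, nsmul_eq_mul]
      push_cast
      ring
    rw [Set.mem_ofPred_eq, h1, norm_neg, Complex.norm_real, Real.norm_eq_abs, sq_abs]
  rw [le_div_iff₀ (by positivity)]
  have h1 := (mul_le_mul_of_nonneg_left hmono (sq_nonneg (H.card * m))).trans (hcheb.trans
    (hL2.trans (mul_le_mul_of_nonneg_left htsum hHpos.le)))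
  refine le_of_mul_le_mul_left (le_trans (le_of_eq ?_) (h1.trans (le_of_eq ?_)))
    (show 0 < H.card * m by positivity) <;> ring

theorem div_ten_le_primeCounting_mul_log {N : ℕ} (hN : 2 ≤ N) :
    (N : ℝ) / 10 ≤ Nat.primeCounting N * Real.log N := by
  have hN' : (2 : ℝ) ≤ N := by exact_mod_cast hN
  have hpi := Chebyshev.pi_ge N
  rw [div_le_iff₀ (Real.log_pos (by linarith))] at hpi
  have h1 := Real.log_le_sub_one_of_pos (show 0 < ((N : ℝ) + 1) / 4 by positivity)
  rw [Real.log_div (by positivity) (by norm_num),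
    show (4 : ℝ) = 2 ^ 2 by norm_num, Real.log_pow] at h1
  push_cast at h1
  have h2 := Real.log_two_gt_d9
  have h3 := Real.log_two_lt_d9
  nlinarith

theorem summable_polynomial_mul_geometric {q : ℝ} (hq0 : 0 ≤ q) (hq1 : q < 1) (c a b d : ℝ) :
    Summable fun L : ℕ => (c + a * (L : ℝ) ^ 2 + b * L) * (d * L) * q ^ L := by
  have hq : ‖q‖ < 1 := by rwa [Real.norm_of_nonneg hq0]
  have h1 := (summable_pow_mul_geometric_of_norm_lt_one 1 hq).mul_left (c * d)
  have h2 := (summable_pow_mul_geometric_of_norm_lt_one 2 hq).mul_left (b * d)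
  have h3 := (summable_pow_mul_geometric_of_norm_lt_one 3 hq).mul_left (a * d)
  refine ((h1.add h2).add h3).congr fun L => ?_
  ring

open AddCircle in
theorem ae_eventually_exists_prime_nsmul_mem (A B : ℝ) (hA : 0 < A) (hB : 0 < B)
    (R : ℕ → Set ℝ) (hsub : ∀ L : ℕ, R L ⊆ Set.Ico (0 : ℝ) 1)
    (hvol : ∀ L : ℕ, ENNReal.ofReal (B ^ (-(L : ℝ))) ≤ volume (R L))
    (hintervals : ∀ L : ℕ, ∃ (n : ℕ) (I : Fin n → Set ℝ),
      (n : ℝ) ≤ A ^ (L ^ 2) ∧ (∀ i, (I i).OrdConnected) ∧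
      (Pairwise fun i j => Disjoint (I i) (I j)) ∧ R L = ⋃ i, I i) {η : ℝ} (hη : 0 < η) :
    ∀ᵐ x : UnitAddCircle ∂haarAddCircle, ∀ᶠ L : ℕ in atTop, ∃ p : ℕ, p.Prime ∧
      (p : ℝ) ≤ (1 + η) ^ L / volume.real (R L) ∧ (equivIco (1 : ℝ) 0 (p • x) : ℝ) ∈ R L := by
  set X : ℕ → ℝ := fun L => (1 + η) ^ L / volume.real (R L)
  set E : ℕ → Set UnitAddCircle := fun L =>
    {x | ∀ p ∈ Nat.primesLE ⌊X L⌋₊, (equivIco (1 : ℝ) 0 (p • x) : ℝ) ∉ R L} with hE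
  set C := ∑' n : ℤ, |(n : ℝ)| ^ (-(3 / 2) : ℝ)
  have hC0 : 0 ≤ C := tsum_nonneg fun n => by positivity
  set D := |Real.log ((1 + η) * B)|
  have hfin : ∀ L, volume (R L) ≠ ⊤ := fun L =>
    measure_ne_top_of_subset (hsub L) (by simp)
  have hvolr : ∀ L, (B ^ L)⁻¹ ≤ volume.real (R L) := fun L => by
    have h := (ENNReal.ofReal_le_iff_le_toReal (hfin L)).mp (hvol L)
    rwa [Real.rpow_neg hB.le, Real.rpow_natCast] at h
  have hpos : ∀ L, 0 < volume.real (R L) := fun L => lt_of_lt_of_le (by positivity) (hvolr L)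
  have hle1 : ∀ L, volume.real (R L) ≤ 1 := fun L => by
    calc _ ≤ volume.real (Set.Ico (0 : ℝ) 1) := measureReal_mono (hsub L) (by simp)
      _ = 1 := by simp
  have hinv : ∀ L, (volume.real (R L))⁻¹ ≤ B ^ L := fun L =>
    inv_le_of_inv_le₀ (by positivity) (hvolr L)
  have hbound : ∀ᶠ L : ℕ in atTop, ‖(haarAddCircle (T := 1)).real (E L)‖ ≤
      (1 + 4 * C + 8 * |Real.log A| * (L : ℝ) ^ 2 + 4 * |Real.log B| * L) * (20 * D * L) *
        (1 + η)⁻¹ ^ L := by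
    have htend := tendsto_pow_atTop_atTop_of_one_lt (show (1 : ℝ) < 1 + η by linarith)
    filter_upwards [htend.eventually_ge_atTop 2] with L hL
    obtain ⟨k, I, hk, hI, hdisj, hR⟩ := hintervals L
    set m := volume.real (R L) with hm
    have hm0 : 0 < m := hpos L
    have hXL : X L = (1 + η) ^ L / m := rfl
    have hX2 : 2 ≤ X L := hL.trans (by
      rw [hXL, le_div_iff₀ hm0]
      exact mul_le_of_le_one_right (by positivity) (hle1 L))
    set N := ⌊X L⌋₊ with hN
    have hN2 : 2 ≤ N := Nat.le_floor (by exact_mod_cast hX2)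
    have hNX : (N : ℝ) ≤ X L := Nat.floor_le (by linarith)
    have hXN : X L / 2 ≤ N := by
      have := Nat.lt_floor_add_one (X L)
      have hN2' : (2 : ℝ) ≤ N := by exact_mod_cast hN2
      rw [← hN] at this
      linarith
    have hcard : (Nat.primesLE N).card = Nat.primeCounting N :=
      Nat.primesLE_card_eq_primeCounting N
    have hne : (Nat.primesLE N).Nonempty :=
      ⟨2, Nat.mem_primesLE.mpr ⟨hN2, Nat.prime_two⟩⟩
    have key := measureReal_forall_nsmul_notMem_le (hsub L) hI hdisj hR hm0
      (fun p hp => (Nat.mem_primesLE.mp hp).2) hne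
    rw [hcard] at key
    have hlogX : Real.log N ≤ D * L := by
      have h1 : X L ≤ ((1 + η) * B) ^ L := by
        rw [hXL, mul_pow, div_eq_mul_inv]
        gcongr
        exact hinv L
      have h2 := Real.log_le_log (by positivity) (hNX.trans h1)
      rw [Real.log_pow] at h2
      calc _ ≤ _ := h2
        _ ≤ L * D := by
          gcongr
          exact le_abs_self _
        _ = _ := mul_comm _ _
    have hlogT : Real.log (k ^ 2 / m) ≤ 2 * |Real.log A| * (L : ℝ) ^ 2 + |Real.log B| * L := by
      have hk0 : 0 < (k : ℝ) := by
        have : k ≠ 0 := by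
          rintro rfl
          simp [hm, hR] at hm0
        exact_mod_cast Nat.pos_of_ne_zero this
      have h1 : (k : ℝ) ^ 2 / m ≤ (A ^ (L ^ 2)) ^ 2 * B ^ L := by
        rw [div_eq_mul_inv]
        gcongr
        exact hinv L
      have h2 := Real.log_le_log (by positivity) h1
      rw [Real.log_mul (by positivity) (by positivity), Real.log_pow, Real.log_pow,
        Real.log_pow] at h2
      push_cast at h2
      have h3 : (L : ℝ) ^ 2 * Real.log A ≤ (L : ℝ) ^ 2 * |Real.log A| := by
        gcongr
        exact le_abs_self _
      have h4 : (L : ℝ) * Real.log B ≤ L * |Real.log B| := by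
        gcongr
        exact le_abs_self _
      linarith
    have hpi0 : (0 : ℝ) < Nat.primeCounting N := by
      rw [← hcard]
      exact_mod_cast hne.card_pos
    have hpi : 1 ≤ 20 * D * L * (1 + η)⁻¹ ^ L * (Nat.primeCounting N * m) := by
      have h1 : X L / 20 ≤ Nat.primeCounting N * (D * L) :=
        calc X L / 20 ≤ N / 10 := by linarith
          _ ≤ Nat.primeCounting N * Real.log N := div_ten_le_primeCounting_mul_log hN2
          _ ≤ _ := by gcongr
      have h2 : (1 + η)⁻¹ ^ L * m * X L = 1 := by
        rw [hXL, inv_pow]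
        field_simp
      calc (1 : ℝ) = 20 * ((1 + η)⁻¹ ^ L * m) * (X L / 20) := by linear_combination -h2
        _ ≤ 20 * ((1 + η)⁻¹ ^ L * m) * (Nat.primeCounting N * (D * L)) := by gcongr
        _ = _ := by ring
    rw [Real.norm_of_nonneg measureReal_nonneg]
    refine key.trans ?_
    rw [div_le_iff₀ (by positivity)]
    set W := 1 + 4 * C + 8 * |Real.log A| * (L : ℝ) ^ 2 + 4 * |Real.log B| * L
    have hW0 : 0 ≤ W := by positivity
    calc _ ≤ W := by linarith
      _ ≤ W * (20 * D * L * (1 + η)⁻¹ ^ L * (Nat.primeCounting N * m)) :=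
        le_mul_of_one_le_right hW0 hpi
      _ = _ := by ring
  have hsum : Summable fun L => (haarAddCircle (T := 1)).real (E L) :=
    Summable.of_norm_bounded_eventually_nat
      (summable_polynomial_mul_geometric (by positivity)
        (inv_lt_one_of_one_lt₀ (by linarith)) _ _ _ _) hbound
  have htop : ∑' L, haarAddCircle (E L) ≠ ⊤ := by
    simpa [ofReal_measureReal] using hsum.tsum_ofReal_ne_top
  filter_upwards [ae_eventually_notMem htop] with x hx
  filter_upwards [hx] with L hL
  simp only [hE, Set.mem_ofPred_eq, not_forall, not_not] at hL
  obtain ⟨p, hp, hpR⟩ := hL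
  obtain ⟨hpN, hpp⟩ := Nat.mem_primesLE.mp hp
  exact ⟨p, hpp, (Nat.cast_le.mpr hpN).trans
    (Nat.floor_le (div_nonneg (by positivity) (hpos L).le)), hpR⟩

theorem stmt11 (A B : ℝ) (hA : 0 < A) (hB : 0 < B)
    (R : ℕ → Set ℝ)
    (hmeas : ∀ L : ℕ, MeasurableSet (R L))
    (hsub : ∀ L : ℕ, R L ⊆ Set.Ico (0 : ℝ) 1)
    (hvol : ∀ L : ℕ, ENNReal.ofReal (B ^ (-(L : ℝ))) ≤ volume (R L))
    (hintervals : ∀ L : ℕ, ∃ (n : ℕ) (I : Fin n → Set ℝ),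
      (n : ℝ) ≤ A ^ (L ^ 2) ∧ (∀ i, (I i).OrdConnected) ∧
      (Pairwise fun i j => Disjoint (I i) (I j)) ∧ R L = ⋃ i, I i) :
    ∀ᵐ α ∂(volume : Measure ℝ), α ∈ Set.Ico (0 : ℝ) 1 → ∀ η > 0,
      ∃ᶠ L : ℕ in atTop, ∃ h : ℕ, 0 < h ∧
        (h : ℝ) ≤ (1 + η) ^ L / (volume (R L)).toReal ∧ Int.fract ((h : ℝ) * α) ∈ R L := by
  have hall := ae_all_iff.mpr fun j : ℕ =>
    ae_eventually_exists_prime_nsmul_mem A B hA hB R hsub hvol hintervals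
      (Nat.one_div_pos_of_nat (α := ℝ) (n := j))
  have hvolume : (volume : Measure UnitAddCircle) = AddCircle.haarAddCircle := by
    rw [AddCircle.volume_eq_smul_haarAddCircle, ENNReal.ofReal_one, one_smul]
  rw [← hvolume] at hall
  have hpull := (UnitAddCircle.measurePreserving_mk 0).quasiMeasurePreserving.ae hall
  rw [← Measure.restrict_congr_set Ico_ae_eq_Ioc,
    ae_restrict_iff' measurableSet_Ico] at hpull
  filter_upwards [hpull] with α hα hα01 η hη
  obtain ⟨j, hj⟩ := exists_nat_one_div_lt hη
  refine Eventually.frequently ?_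
  filter_upwards [hα (by rwa [zero_add]) j] with L hL
  obtain ⟨p, hp, hpX, hpR⟩ := hL
  refine ⟨p, hp.pos, hpX.trans ?_, ?_⟩
  · rw [measureReal_def]
    gcongr
  · rw [← AddCircle.coe_nsmul, nsmul_eq_mul] at hpR
    have := AddCircle.coe_equivIco_mk_apply (1 : ℝ) (p * α)
    rw [div_one, mul_one] at this
    rwa [← this]
end

section
/- Let f ∈ ℤ[x] be a polynomial of degree d ≥ 2. Then for every ε > 0 there exists a constant C_ε such that for every nonzero integer a, the number of pairs (x,y) of positive integers with f(x) − f(y) = a is at most C_ε·|a|^ε. -/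
open Polynomial in
/-- If `deg f ≥ 2` and `h ≠ 0`, then `f(X + h) - f(X)` is not
constant. -/
lemma Polynomial.comp_X_add_C_sub_self_sub_C_ne_zero {f : ℤ[X]} (hdeg : 2 ≤ f.natDegree)
    {h : ℤ} (hh : h ≠ 0) (a : ℤ) : f.comp (X + C h) - f - C a ≠ 0 := by
  intro h0
  have step (x : ℤ) : f.eval (x + h) = f.eval x + a := by
    have := congrArg (eval x) h0
    simp only [eval_sub, eval_comp, eval_add, eval_X, eval_C, eval_zero] at this
    linarith
  have arith (n : ℕ) : f.eval (h * n) = a * n + f.eval 0 := by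
    induction n with
    | zero => simp
    | succ n ih =>
      have := step (h * n)
      push_cast
      rw [mul_add, mul_one, this, ih]
      ring
  have heq : f.comp (C h * X) = C a * X + C (f.eval 0) := by
    refine eq_of_infinite_eval_eq _ _ ?_
    refine (Set.infinite_range_of_injective (Nat.cast_injective (R := ℤ))).mono ?_
    rintro _ ⟨n, rfl⟩
    simpa using arith n
  have hle : (f.comp (C h * X)).natDegree ≤ 1 := heq ▸ natDegree_linear_le
  rw [natDegree_comp, natDegree_C_mul_X h hh] at hle
  omega

open Polynomial in
lemma Polynomial.natDegree_comp_X_add_C_sub_self_sub_C_le (f : ℤ[X]) (h a : ℤ) :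
    (f.comp (X + C h) - f - C a).natDegree ≤ f.natDegree := by
  refine (natDegree_sub_le _ _).trans (max_le ((natDegree_sub_le _ _).trans (max_le ?_ le_rfl)) ?_)
  · rw [natDegree_comp, natDegree_X_add_C, mul_one]
  · simp

/-- The divisor bound: `τ(n) ≤ C_ε n ^ ε`. -/
lemma Nat.exists_card_divisors_le_mul_rpow {ε : ℝ} (hε : 0 < ε) :
    ∃ C : ℝ, ∀ n : ℕ, n ≠ 0 → (n.divisors.card : ℝ) ≤ C * (n : ℝ) ^ ε := by
  obtain ⟨P, hP⟩ := exists_nat_gt ((2 : ℝ) ^ ε⁻¹)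
  have hlog : 0 < ε * Real.log 2 := mul_pos hε (Real.log_pos one_lt_two)
  set A : ℝ := max 1 (ε * Real.log 2)⁻¹
  have hA1 : 1 ≤ A := le_max_left _ _
  have hA : 1 ≤ A * (ε * Real.log 2) :=
    (inv_mul_cancel₀ hlog.ne').symm.le.trans
      (mul_le_mul_of_nonneg_right (le_max_right _ _) hlog.le)
  have small (p k : ℕ) (hp : p.Prime) : ((k : ℝ) + 1) ≤ A * ((p : ℝ) ^ ε) ^ k := by
    have h2p : (2 : ℝ) ≤ p := by exact_mod_cast hp.two_le
    have hpow : 1 + k * (ε * Real.log 2) ≤ ((p : ℝ) ^ ε) ^ k := calc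
      1 + k * (ε * Real.log 2) ≤ (1 + ε * Real.log 2) ^ k :=
        one_add_mul_le_pow (by linarith) k
      _ ≤ ((p : ℝ) ^ ε) ^ k := by
        gcongr
        calc 1 + ε * Real.log 2 ≤ Real.exp (Real.log 2 * ε) := by
              have := Real.add_one_le_exp (Real.log 2 * ε)
              linarith
          _ = (2 : ℝ) ^ ε := (Real.rpow_def_of_pos two_pos ε).symm
          _ ≤ (p : ℝ) ^ ε := by gcongr
    calc (k : ℝ) + 1 ≤ A * (1 + k * (ε * Real.log 2)) := by
          nlinarith [mul_le_mul_of_nonneg_left hA (Nat.cast_nonneg (α := ℝ) k)]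
      _ ≤ _ := by gcongr
  have large (p k : ℕ) (hp : P ≤ p) : ((k : ℝ) + 1) ≤ ((p : ℝ) ^ ε) ^ k := by
    have h2 : (2 : ℝ) ≤ (p : ℝ) ^ ε := calc
      (2 : ℝ) = ((2 : ℝ) ^ ε⁻¹) ^ ε := by
        rw [← Real.rpow_mul two_pos.le, inv_mul_cancel₀ hε.ne', Real.rpow_one]
      _ ≤ (p : ℝ) ^ ε := by
        have : (P : ℝ) ≤ p := by exact_mod_cast hp
        gcongr
        linarith
    calc (k : ℝ) + 1 ≤ 2 ^ k := by exact_mod_cast Nat.lt_two_pow_self (n := k)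
      _ ≤ _ := by gcongr
  refine ⟨A ^ P, fun n hn => ?_⟩
  have hprod : ∏ p ∈ n.primeFactors, ((p : ℝ) ^ ε) ^ n.factorization p = (n : ℝ) ^ ε := by
    conv_rhs => rw [← Nat.prod_factorization_pow_eq_self hn]
    rw [Finsupp.prod, Nat.support_factorization, Nat.cast_prod,
      ← Real.finsetProd_rpow _ _ (fun _ _ => by positivity)]
    refine Finset.prod_congr rfl fun p _ => ?_
    rw [Nat.cast_pow, ← Real.rpow_natCast, ← Real.rpow_natCast, ← Real.rpow_mul (by positivity),
      ← Real.rpow_mul (by positivity), mul_comm]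
  have hconst : ∏ p ∈ n.primeFactors, (if p < P then A else 1) ≤ A ^ P := by
    rw [← Finset.prod_filter, Finset.prod_const]
    refine pow_le_pow_right₀ hA1 ?_
    calc (n.primeFactors.filter (· < P)).card ≤ (Finset.range P).card :=
          Finset.card_le_card fun p hp => by simpa using (Finset.mem_filter.mp hp).2
      _ = P := Finset.card_range P
  calc (n.divisors.card : ℝ) = ∏ p ∈ n.primeFactors, ((n.factorization p : ℝ) + 1) := by
        rw [Nat.card_divisors hn]
        push_cast
        rfl
    _ ≤ ∏ p ∈ n.primeFactors, (if p < P then A else 1) * ((p : ℝ) ^ ε) ^ n.factorization p := by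
        refine Finset.prod_le_prod (fun _ _ => by positivity) fun p hp => ?_
        split_ifs with hpP
        · exact small p _ (Nat.prime_of_mem_primeFactors hp)
        · simpa using large p _ (not_lt.mp hpP)
    _ ≤ A ^ P * (n : ℝ) ^ ε := by
        rw [Finset.prod_mul_distrib, hprod]
        gcongr

open Polynomial in
/-- The solutions of `f(x) - f(y) = a` are parametrised by a divisor `x - y` of `a` together with a
root of a nonzero polynomial of degree at most `deg f`. -/
lemma exists_finset_solutions_card_le {f : ℤ[X]} (hdeg : 2 ≤ f.natDegree) {a : ℤ} (ha : a ≠ 0) :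
    ∃ T : Finset (ℕ × ℕ), T.card ≤ 2 * a.natAbs.divisors.card * f.natDegree ∧
      ∀ x y : ℕ, f.eval (x : ℤ) - f.eval (y : ℤ) = a → (x, y) ∈ T := by
  classical
  let D : Finset ℤ := a.natAbs.divisors.image (fun n : ℕ => (n : ℤ)) ∪
    a.natAbs.divisors.image (fun n : ℕ => -(n : ℤ))
  have hD : D.card ≤ 2 * a.natAbs.divisors.card := by
    rw [two_mul]
    exact (Finset.card_union_le _ _).trans
      (add_le_add Finset.card_image_le Finset.card_image_le)
  refine ⟨D.biUnion fun h => (f.comp (X + C h) - f - C a).roots.toFinset.image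
    fun y => ((y + h).toNat, y.toNat), ?_, fun x y hxy => ?_⟩
  · refine (Finset.card_biUnion_le_card_mul _ _ f.natDegree fun h _ => ?_).trans
      (Nat.mul_le_mul_right _ hD)
    exact Finset.card_image_le.trans <| (Multiset.toFinset_card_le _).trans <|
      (card_roots' _).trans (natDegree_comp_X_add_C_sub_self_sub_C_le f h a)
  · have hdvd : (x : ℤ) - y ∣ a := hxy ▸ sub_dvd_eval_sub (x : ℤ) y f
    have hne : (x : ℤ) - y ≠ 0 := fun h0 => ha (zero_dvd_iff.mp (h0 ▸ hdvd))
    have hmem : ((x : ℤ) - y).natAbs ∈ a.natAbs.divisors := by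
      simpa [Nat.mem_divisors, ha] using Int.natAbs_dvd_natAbs.mpr hdvd
    refine Finset.mem_biUnion.mpr ⟨(x : ℤ) - y, ?_, Finset.mem_image.mpr ⟨(y : ℤ), ?_, ?_⟩⟩
    · rcases Int.natAbs_eq ((x : ℤ) - y) with h | h
      · exact Finset.mem_union_left _ (Finset.mem_image.mpr ⟨_, hmem, h.symm⟩)
      · exact Finset.mem_union_right _ (Finset.mem_image.mpr ⟨_, hmem, h.symm⟩)
    · rw [Multiset.mem_toFinset, mem_roots (comp_X_add_C_sub_self_sub_C_ne_zero hdeg hne a),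
        IsRoot.def]
      simp only [eval_sub, eval_comp, eval_add, eval_X, eval_C, add_sub_cancel]
      linarith
    · simp

theorem stmt13 (f : Polynomial ℤ) (hdeg : 2 ≤ f.natDegree) :
    ∀ ε > (0 : ℝ), ∃ Cε : ℝ, ∀ a : ℤ, a ≠ 0 →
      {p : ℕ × ℕ | 0 < p.1 ∧ 0 < p.2 ∧ f.eval (p.1 : ℤ) - f.eval (p.2 : ℤ) = a}.Finite ∧
      ({p : ℕ × ℕ | 0 < p.1 ∧ 0 < p.2 ∧
          f.eval (p.1 : ℤ) - f.eval (p.2 : ℤ) = a}.ncard : ℝ) ≤ Cε * (|a| : ℝ) ^ ε := by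
  intro ε hε
  obtain ⟨C, hC⟩ := Nat.exists_card_divisors_le_mul_rpow hε
  refine ⟨2 * f.natDegree * C, fun a ha => ?_⟩
  obtain ⟨T, hT, hmem⟩ := exists_finset_solutions_card_le hdeg ha
  have hsub : {p : ℕ × ℕ | 0 < p.1 ∧ 0 < p.2 ∧
      f.eval (p.1 : ℤ) - f.eval (p.2 : ℤ) = a} ⊆ (T : Set (ℕ × ℕ)) :=
    fun p hp => hmem p.1 p.2 hp.2.2
  refine ⟨T.finite_toSet.subset hsub, ?_⟩
  have hcard := (Set.ncard_le_ncard hsub T.finite_toSet).trans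
    ((Set.ncard_coe_finset T).trans_le hT)
  have hdiv := hC a.natAbs (Int.natAbs_ne_zero.mpr ha)
  rw [Nat.cast_natAbs, Int.cast_abs] at hdiv
  calc _ ≤ ((2 * a.natAbs.divisors.card * f.natDegree : ℕ) : ℝ) := by exact_mod_cast hcard
    _ = 2 * f.natDegree * (a.natAbs.divisors.card : ℝ) := by push_cast; ring
    _ ≤ 2 * f.natDegree * (C * |(a : ℝ)| ^ ε) := by gcongr
    _ = _ := by ring
end
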